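/- arXiv:1701.01849 — 6 statements merged into one kernel-verified Lean document; each statement's English description precedes it below -/
import Mathlib

section
/- Logarithmic surjectivity bound: let f ∈ P₃(kⁿ) have q-rank r with r > exp(240) (real exponential), and let d ≤ n be a positive integer with d < (1/3)·log(r) (real natural logarithm). Then the Zariski closure of the GLₙ(k)-orbit of f surjects onto P₃(k^d): for every homogeneous degree-3 polynomial h in the first d variables there exists g in the Zariski closure of the GLₙ(k)-orbit of f with π_d(g) = h. -/
open scoped BigOperators

/-- The q-rank of a multivariate polynomial `f`: the least `m` such that
`f = ∑ ℓᵢ · qᵢ` with each `ℓᵢ` homogeneous of degree 1 and each `qᵢ` homogeneous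
of degree 2, as an element of `ℕ∞`. -/
noncomputable def polyQRank {k : Type*} [Field k] {n : ℕ}
    (f : MvPolynomial (Fin n) k) : ℕ∞ :=
  sInf {r : ℕ∞ | ∃ m : ℕ, r = m ∧
    ∃ ℓ q : Fin m → MvPolynomial (Fin n) k,
      (∀ i, (ℓ i).IsHomogeneous 1) ∧ (∀ i, (q i).IsHomogeneous 2) ∧
        f = ∑ i, ℓ i * q i}

/-- The action of `GLₙ(k)` on `MvPolynomial (Fin n) k` by invertible linear
substitution of the variables. -/
noncomputable def glAct {k : Type*} [Field k] {n : ℕ} (g : GL (Fin n) k)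
    (f : MvPolynomial (Fin n) k) : MvPolynomial (Fin n) k :=
  MvPolynomial.aeval
    (fun j => ∑ i, MvPolynomial.C ((g : Matrix (Fin n) (Fin n) k) i j) *
      MvPolynomial.X i) f

/-- The `GLₙ(k)`-orbit of a polynomial. -/
def glOrbit {k : Type*} [Field k] {n : ℕ} (f : MvPolynomial (Fin n) k) :
    Set (MvPolynomial (Fin n) k) :=
  {h | ∃ g : GL (Fin n) k, h = glAct g f}

/-- `g` lies in the Zariski closure of `S ⊆ MvPolynomial (Fin n) k`: every polynomial
in the coefficients (coordinates w.r.t. the monomial basis) vanishing on `S`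
vanishes at `g`. -/
def InZariskiClosure {k : Type*} [Field k] {n : ℕ}
    (S : Set (MvPolynomial (Fin n) k)) (g : MvPolynomial (Fin n) k) : Prop :=
  ∀ P : MvPolynomial (Fin n →₀ ℕ) k,
    (∀ f ∈ S, MvPolynomial.eval (fun m => MvPolynomial.coeff m f) P = 0) →
    MvPolynomial.eval (fun m => MvPolynomial.coeff m g) P = 0

/-- `ξ(d) = ⌊(√(8d+17) − 3)/2⌋`. -/
noncomputable def xi (d : ℕ) : ℕ := ⌊(Real.sqrt (8 * d + 17) - 3) / 2⌋₊

/-- The restriction map `π_d : P₃(kⁿ) → P₃(k^d)`: substitute `0` for all variables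
of index `≥ d`. -/
noncomputable def restrictVars {k : Type*} [Field k] {n : ℕ} (d : ℕ)
    (f : MvPolynomial (Fin n) k) : MvPolynomial (Fin d) k :=
  MvPolynomial.aeval
    (fun i : Fin n => if h : (i : ℕ) < d then MvPolynomial.X ⟨i, h⟩ else 0) f


/-!
A cubic form that vanishes on the common zeros of `s` quadratic forms has q-rank at most `3s⁴`, by
induction on `s`. If some nontrivial combination of the quadrics has small rank, restrict to its
kernel, on which one of the quadrics is redundant. Otherwise, because all combinations have large
rank, there are vectors `uᵢ` spanning an isotropic subspace for all the quadrics, on which their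
polar forms are independent. Any curve can then be corrected along the `uᵢ` to one on which all the
quadrics vanish, and expanding the cubic along such a curve writes it, on a subspace of small
codimension, as a combination of the quadrics with linear coefficients.

Consequently a cubic form of q-rank greater than `4m⁴` becomes a sum of `m` cubes after a linear
substitution: given a partial diagonal system `v₁, …, vᵢ`, a further vector `x` has to satisfy
linear conditions `T vₐ v_b x = 0` and quadratic conditions `T vₐ x x = 0`, and `T x x x ≠ 0`. Every
cubic form in `d` variables is a sum of `4d³` cubes of linear forms, hence a linear substitution of
any cubic form of q-rank greater than `1024d¹²`. Arbitrary linear substitutions are limits of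
invertible ones.
-/

section QuadraticPolynomial

open MvPolynomial

/-- The quadratic polynomial `x ↦ B x x` in the coordinates of a basis `b`. -/
noncomputable def quadraticPolynomial {k V σ : Type*} [Field k] [AddCommGroup V] [Module k V]
    [Fintype σ] (b : Module.Basis σ k V) (B : LinearMap.BilinForm k V) : MvPolynomial σ k :=
  ∑ i, ∑ j, C (B (b i) (b j)) * (X i * X j)

variable {k V σ : Type*} [Field k] [AddCommGroup V] [Module k V] [Fintype σ]
  (b : Module.Basis σ k V) (B : LinearMap.BilinForm k V)

theorem isHomogeneous_quadraticPolynomial : (quadraticPolynomial b B).IsHomogeneous 2 :=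
  .sum _ _ _ fun _ _ => .sum _ _ _ fun _ _ =>
    ((isHomogeneous_X k _).mul (isHomogeneous_X k _)).C_mul _

theorem eval_quadraticPolynomial (x : σ → k) :
    eval x (quadraticPolynomial b B) = B (b.equivFun.symm x) (b.equivFun.symm x) := by
  simp only [quadraticPolynomial, map_sum, map_mul, eval_C, eval_X,
    Module.Basis.equivFun_symm_apply, map_smul, LinearMap.sum_apply, LinearMap.smul_apply,
    smul_eq_mul]
  rw [Finset.sum_comm]
  simp only [Finset.mul_sum]
  exact Finset.sum_congr rfl fun _ _ => Finset.sum_congr rfl fun _ _ => by ring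

end QuadraticPolynomial

section CommonZeros

open MvPolynomial

theorem eval_bind₁ {R σ τ : Type*} [CommSemiring R] (φ : σ → MvPolynomial τ R)
    (f : MvPolynomial σ R) (x : τ → R) :
    eval x (bind₁ φ f) = eval (fun i => eval x (φ i)) f :=
  eval₂Hom_bind₁ (RingHom.id R) x φ f

variable {k : Type*} [Field k] [IsAlgClosed k]

theorem exists_height_vanishingIdeal_singleton_eq_card (σ : Type*) [Fintype σ] :
    ∃ x : σ → k, (vanishingIdeal k {x}).height = Fintype.card σ := by
  have hdim : ringKrullDim (MvPolynomial σ k) = Fintype.card σ := by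
    rw [MvPolynomial.ringKrullDim_of_isNoetherianRing, ringKrullDim_eq_zero_of_field, zero_add,
      Nat.card_eq_fintype_card]
  have : FiniteRingKrullDim (MvPolynomial σ k) :=
    finiteRingKrullDim_iff_ne_bot_and_top.2 (by rw [hdim]; exact ⟨nofun, nofun⟩)
  obtain ⟨m, hm, hheight⟩ := Ideal.exists_isMaximal_height (R := MvPolynomial σ k)
  obtain ⟨x, rfl⟩ := isMaximal_iff_eq_vanishingIdeal_singleton.1 hm
  exact ⟨x, by rw [hdim] at hheight; exact_mod_cast hheight⟩

theorem card_le_card_of_forall_eval_eq_zero_iff {σ ι : Type*} [Fintype σ] [Fintype ι]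
    (p : ι → MvPolynomial σ k) (hp : ∀ x, (∀ i, eval x (p i) = 0) ↔ x = 0) :
    Fintype.card σ ≤ Fintype.card ι := by
  obtain ⟨y, hy⟩ := exists_height_vanishingIdeal_singleton_eq_card (k := k) σ
  let q : ι → MvPolynomial σ k := fun i => bind₁ (fun j => X j - C (y j)) (p i)
  have eval_q (x : σ → k) (i : ι) : eval x (q i) = eval (x - y) (p i) := by
    simp only [q, eval_bind₁, map_sub, eval_X, eval_C]
    rfl
  have zeroLocus_q : zeroLocus k (Ideal.span (Set.range q)) = {y} := by
    ext x
    simp [zeroLocus_span, aeval_eq_eval, eval_q, hp, sub_eq_zero]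
  have minimal : vanishingIdeal k {y} ∈ (Ideal.span (Set.range q)).minimalPrimes := by
    rw [← Ideal.radical_minimalPrimes, ← vanishingIdeal_zeroLocus_eq_radical (K := k), zeroLocus_q,
      Ideal.minimalPrimes_eq_subsingleton_self]
    rfl
  have krull := Ideal.height_le_card_of_mem_minimalPrimes_span (Set.finite_range q) minimal
  rw [hy, Nat.cast_le] at krull
  exact krull.trans (by
    simpa [Nat.card_eq_fintype_card] using Finite.card_range_le q)

theorem exists_ne_zero_forall_apply_self_eq_zero {V ι : Type*} [AddCommGroup V] [Module k V]
    [FiniteDimensional k V] [Fintype ι] (B : ι → LinearMap.BilinForm k V)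
    (h : Fintype.card ι < Module.finrank k V) : ∃ x ≠ 0, ∀ i, B i x x = 0 := by
  let b := Module.finBasis k V
  by_contra! hB
  have only_zero (x : Fin (Module.finrank k V) → k) :
      (∀ i, eval x (quadraticPolynomial b (B i)) = 0) ↔ x = 0 := by
    refine ⟨fun hx => ?_, fun hx i => by rw [hx, eval_quadraticPolynomial]; simp⟩
    by_contra hx0
    obtain ⟨i, hi⟩ := hB (b.equivFun.symm x) (b.equivFun.symm.map_ne_zero_iff.2 hx0)
    exact hi ((eval_quadraticPolynomial b (B i) x).symm.trans (hx i))
  exact h.not_ge (by simpa using card_le_card_of_forall_eval_eq_zero_iff _ only_zero)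

end CommonZeros

section LinearAlgebra

variable {k V U ι : Type*} [Field k] [AddCommGroup V] [Module k V] [AddCommGroup U] [Module k U]

theorem exists_forall_apply_eq [Finite ι] {φ : ι → Module.Dual k V} (hφ : LinearIndependent k φ)
    (c : ι → k) : ∃ x, ∀ i, φ i x = c i := by
  have : c ∈ LinearMap.range (LinearMap.pi φ) := by
    rw [LinearMap.range_eq_top.2]
    · trivial
    have hcoe : LinearIndependent k fun i => ⇑(φ i) :=
      hφ.map' (LinearMap.ltoFun k V k k) (LinearMap.ker_eq_bot.2 DFunLike.coe_injective)
    rw [← LinearMap.range_eq_top, ← top_le_iff, ← span_flip_eq_top_iff_linearIndependent.2 hcoe,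
      Submodule.span_le]
    rintro _ ⟨x, rfl⟩
    exact ⟨x, rfl⟩
  obtain ⟨x, rfl⟩ := this
  exact ⟨x, fun _ => rfl⟩

theorem linearIndependent_apply_linearCombination {κ μ : Type*} [Finite ι] [Fintype κ]
    [Finite μ] (B : ι → V →ₗ[k] U) {e : κ → V}
    (he : LinearIndependent k fun p : ι × κ => B p.1 (e p.2)) {x : μ → κ → k}
    (hx : LinearIndependent k x) :
    LinearIndependent k fun p : ι × μ => B p.1 (Fintype.linearCombination k e (x p.2)) := by
  cases nonempty_fintype ι
  cases nonempty_fintype μ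
  rw [Fintype.linearIndependent_iff] at he hx ⊢
  rintro c hc ⟨i, j⟩
  have relation : ∑ p : ι × κ, (∑ j, c (p.1, j) • x j) p.2 • B p.1 (e p.2) = 0 := by
    rw [← hc, Fintype.sum_prod_type, Fintype.sum_prod_type]
    refine Finset.sum_congr rfl fun i _ => ?_
    simp only [Fintype.linearCombination_apply, map_sum, map_smul, Finset.smul_sum, smul_smul,
      Finset.sum_apply, Pi.smul_apply, smul_eq_mul, Finset.sum_smul]
    exact Finset.sum_comm
  exact hx (fun j => c (i, j)) (funext fun a => he _ relation (i, a)) j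

variable [Infinite k]

theorem exists_linearIndependent_smul_add [Finite ι] {v : ι → U}
    (hv : LinearIndependent k v) (w : ι → U) :
    ∃ t : k, LinearIndependent k fun i => t • v i + w i := by
  cases nonempty_fintype ι
  obtain ⟨P, hP⟩ := (Fintype.linearCombination k v).exists_leftInverse_of_injective
    (LinearMap.ker_eq_bot.2 hv.fintypeLinearCombination_injective)
  let N : Module.End k (ι → k) := -P ∘ₗ Fintype.linearCombination k w
  obtain ⟨t, ht⟩ := (Module.End.finite_spectrum N).exists_notMem
  have unit : IsUnit (algebraMap k _ t - N) := spectrum.notMem_iff.1 ht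
  have factor (c : ι → k) : (algebraMap k _ t - N) c =
      P (Fintype.linearCombination k (fun i => t • v i + w i) c) := by
    have hPc : P (Fintype.linearCombination k v c) = c := LinearMap.congr_fun hP c
    have split : Fintype.linearCombination k (fun i => t • v i + w i) c =
        t • Fintype.linearCombination k v c + Fintype.linearCombination k w c := by
      simp [Fintype.linearCombination_apply, Finset.sum_add_distrib, Finset.smul_sum, smul_comm t]
    simp [split, hPc, N, Module.algebraMap_end_eq_smul_id]
  refine ⟨t, linearIndependent_iff_injective_fintypeLinearCombination.2 fun c c' h => ?_⟩
  exact ((Module.End.isUnit_iff _).1 unit).injective (by rw [factor, factor, h])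

theorem exists_linearIndependent_apply_and_apply_notMem_span {s : ℕ} {B : Fin s → V →ₗ[k] U}
    {S : V →ₗ[k] U} {x y : V} (hx : LinearIndependent k fun i => B i x) (hSx : S x = 0)
    (hSy : S y ∉ Submodule.span k (Set.range fun i => B i x)) :
    ∃ z, LinearIndependent k (fun i => B i z) ∧
      S z ∉ Submodule.span k (Set.range fun i => B i z) := by
  obtain ⟨t, ht⟩ := exists_linearIndependent_smul_add (linearIndependent_finCons.2 ⟨hx, hSy⟩)
    (Fin.cons 0 fun i => B i y)
  have family : (fun j => t • (Fin.cons (S y) fun i => B i x : Fin (s + 1) → U) j +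
      (Fin.cons 0 fun i => B i y : Fin (s + 1) → U) j) =
      Fin.cons (t • S (t • x + y)) fun i => B i (t • x + y) := by
    ext j
    cases j using Fin.cases <;> simp [hSx]
  rw [family, linearIndependent_finCons] at ht
  exact ⟨t • x + y, ht.1, fun h => ht.2 (Submodule.smul_mem _ t h)⟩

theorem exists_linearIndependent_apply_fin {s : ℕ} (B : Fin s → V →ₗ[k] U)
    (hB : ∀ l : Fin s → k, l ≠ 0 → s ≤ Module.finrank k (LinearMap.range (∑ i, l i • B i))) :
    ∃ x, LinearIndependent k fun i => B i x := by
  induction s with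
  | zero => exact ⟨0, linearIndependent_empty_type⟩
  | succ s ih =>
    obtain ⟨x, hx⟩ := ih (Fin.tail B) fun l hl => by
      have sum_eq : ∑ i, (Fin.cons 0 l : Fin (s + 1) → k) i • B i = ∑ i, l i • Fin.tail B i := by
        simp [Fin.sum_univ_succ, Fin.tail]
      exact sum_eq ▸ s.le_succ.trans (hB _ fun h => hl (funext fun i => congrFun h i.succ))
    suffices ∃ z, LinearIndependent k (fun i => Fin.tail B i z) ∧
        B 0 z ∉ Submodule.span k (Set.range fun i => Fin.tail B i z) by
      obtain ⟨z, hz⟩ := this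
      exact ⟨z, (linearIndependent_finSucc (v := fun i => B i z)).2 hz⟩
    by_cases hx0 : B 0 x ∈ Submodule.span k (Set.range fun i => Fin.tail B i x)
    swap
    · exact ⟨x, hx, hx0⟩
    obtain ⟨c, hc⟩ := (Submodule.mem_span_range_iff_exists_fun k).1 hx0
    let S : V →ₗ[k] U := B 0 - ∑ i, c i • Fin.tail B i
    have S_apply (z : V) : S z = B 0 z - ∑ i, c i • Fin.tail B i z := by simp [S]
    have rank_S : s + 1 ≤ Module.finrank k (LinearMap.range S) := by
      have S_eq : ∑ i, (Fin.cons 1 (-c) : Fin (s + 1) → k) i • B i = S := by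
        simp [Fin.sum_univ_succ, S, sub_eq_add_neg, Fin.tail]
      exact S_eq ▸ hB _ fun h => one_ne_zero (congrFun h 0)
    obtain ⟨_, ⟨y, rfl⟩, hy⟩ : ∃ u ∈ LinearMap.range S,
        u ∉ Submodule.span k (Set.range fun i => Fin.tail B i x) := by
      by_contra! hle
      have := FiniteDimensional.span_of_finite k (Set.finite_range fun i => Fin.tail B i x)
      have := (Submodule.finrank_mono hle).trans (finrank_range_le_card _)
      rw [Fintype.card_fin] at this
      lia
    obtain ⟨z, hz, hSz⟩ := exists_linearIndependent_apply_and_apply_notMem_span hx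
      (by rw [S_apply, hc, sub_self]) hy
    refine ⟨z, hz, fun h => hSz ?_⟩
    rw [S_apply]
    exact sub_mem h (sum_mem fun i _ => Submodule.smul_mem _ _ (Submodule.subset_span ⟨i, rfl⟩))

theorem exists_linearIndependent_apply [Fintype ι] (B : ι → V →ₗ[k] U)
    (hB : ∀ l : ι → k, l ≠ 0 →
      Fintype.card ι ≤ Module.finrank k (LinearMap.range (∑ i, l i • B i))) :
    ∃ x, LinearIndependent k fun i => B i x := by
  let e := Fintype.equivFin ι
  obtain ⟨x, hx⟩ := exists_linearIndependent_apply_fin (B ∘ e.symm) fun l hl => by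
    have sum_eq : ∑ i, l (e i) • B i = ∑ i, l i • (B ∘ e.symm) i := by
      rw [← e.symm.sum_comp]
      simp
    exact sum_eq ▸ hB _ fun h => hl (funext fun i => by simpa using congrFun h (e.symm i))
  exact ⟨x, by simpa [Function.comp_def] using hx.comp e e.injective⟩

theorem exists_linearIndependent_apply_prod {κ : Type*} [FiniteDimensional k U] [Fintype ι]
    [Fintype κ] (B : ι → V →ₗ[k] U) (hB : ∀ l : ι → k, l ≠ 0 →
      Fintype.card ι * Fintype.card κ ≤ Module.finrank k (LinearMap.range (∑ i, l i • B i))) :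
    ∃ e : κ → V, LinearIndependent k fun p : ι × κ => B p.1 (e p.2) := by
  classical
  let C : ι × κ → (κ → V) →ₗ[k] U := fun p => B p.1 ∘ₗ LinearMap.proj p.2
  refine exists_linearIndependent_apply C fun l hl => ?_
  obtain ⟨⟨i, a⟩, hia⟩ := Function.ne_iff.1 hl
  have range_le : LinearMap.range (∑ i, l (i, a) • B i) ≤ LinearMap.range (∑ p, l p • C p) := by
    rintro _ ⟨y, rfl⟩
    refine ⟨Pi.single a y, ?_⟩
    simp [C, Fintype.sum_prod_type, Pi.single_apply, apply_ite]
  rw [Fintype.card_prod]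
  exact (hB _ fun h => hia (congrFun h i)).trans (Submodule.finrank_mono range_le)

end LinearAlgebra

section Isotropic

variable {k V ι : Type*} [Field k] [IsAlgClosed k] [AddCommGroup V] [Module k V]
    [FiniteDimensional k V] [Fintype ι] {B : ι → LinearMap.BilinForm k V}

theorem exists_notMem_span_isotropic {m : ℕ} (u : Fin m → V)
    (h : (Fintype.card ι + 1) * (m + 1) ≤ Module.finrank k V) :
    ∃ x ∉ Submodule.span k (Set.range u), (∀ i, B i x x = 0) ∧ ∀ i j, B i (u j) x = 0 := by
  obtain ⟨W, hW⟩ := Submodule.exists_isCompl (Submodule.span k (Set.range u))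
  let φ : W →ₗ[k] ι × Fin m → k := LinearMap.pi fun p => (B p.1 (u p.2)).domRestrict W
  have finrank_W : Module.finrank k V ≤ m + Module.finrank k W := by
    rw [← Submodule.finrank_add_eq_of_isCompl hW]
    gcongr
    exact (finrank_range_le_card (R := k) u).trans_eq (Fintype.card_fin m)
  have finrank_ker : Fintype.card ι < Module.finrank k (LinearMap.ker φ) := by
    have rank_nullity := φ.finrank_range_add_finrank_ker
    have finrank_range : Module.finrank k (LinearMap.range φ) ≤ Fintype.card ι * m := by
      simpa using (LinearMap.range φ).finrank_le
    linarith
  obtain ⟨x, hx0, hx⟩ := exists_ne_zero_forall_apply_self_eq_zero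
    (fun i => ((B i).restrict W).restrict (LinearMap.ker φ)) finrank_ker
  refine ⟨x, fun hxu => hx0 ?_, hx, fun i j => congrFun x.2 (i, j)⟩
  simpa using Submodule.disjoint_def.1 hW.disjoint x hxu x.1.2

theorem exists_linearIndependent_isotropic (hB : ∀ i, (B i).IsSymm) {m : ℕ}
    (h : (Fintype.card ι + 1) * m ≤ Module.finrank k V) :
    ∃ u : Fin m → V, LinearIndependent k u ∧ ∀ i j l, B i (u j) (u l) = 0 := by
  induction m with
  | zero => exact ⟨Fin.elim0, linearIndependent_empty_type, fun _ j => j.elim0⟩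
  | succ m ih =>
    obtain ⟨u, hu, isotropic⟩ := ih (le_trans (by gcongr; lia) h)
    obtain ⟨x, hxu, hxx, hux⟩ := exists_notMem_span_isotropic (B := B) u h
    refine ⟨Fin.cons x u, linearIndependent_finCons.2 ⟨hu, hxu⟩, fun i j l => ?_⟩
    cases j using Fin.cases <;> cases l using Fin.cases <;>
      simp [hxx, hux, isotropic, (hB i).eq x]

theorem exists_isotropic_linearIndependent_apply (hB : ∀ i, (B i).IsSymm) {m : ℕ}
    (hrank : ∀ l : ι → k, l ≠ 0 → Fintype.card ι * ((Fintype.card ι + 1) * m) ≤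
      Module.finrank k (LinearMap.range (∑ i, l i • B i))) :
    ∃ u : Fin m → V, (∀ i j l, B i (u j) (u l) = 0) ∧
      LinearIndependent k fun p : ι × Fin m => B p.1 (u p.2) := by
  obtain ⟨e, he⟩ := exists_linearIndependent_apply_prod (κ := Fin ((Fintype.card ι + 1) * m)) B
    (by simpa using hrank)
  let E := Fintype.linearCombination k e
  obtain ⟨x, hx, isotropic⟩ := exists_linearIndependent_isotropic
    (B := fun i => (B i).compl₁₂ E E) (m := m) (fun i => ⟨fun y z => (hB i).eq (E y) (E z)⟩)
    (by simp)
  exact ⟨fun j => E (x j), isotropic, linearIndependent_apply_linearCombination B he hx⟩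

end Isotropic

/-- A cubic function `F` on a vector space has q-rank at most `c`: it is a sum of at most `c`
products of a linear form and a quadratic form, the latter being given by a bilinear form. -/
def HasQRankLE {k V : Type*} [Field k] [AddCommGroup V] [Module k V] (F : V → k) (c : ℕ) : Prop :=
  ∃ m ≤ c, ∃ (ℓ : Fin m → Module.Dual k V) (q : Fin m → LinearMap.BilinForm k V),
    ∀ x, F x = ∑ i, ℓ i x * q i x x

/-- Symmetry of a trilinear form in its three arguments, expressed by two adjacent
transpositions. -/
structure IsSymmTrilinear {k V : Type*} [Field k] [AddCommGroup V] [Module k V]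
    (T : V →ₗ[k] V →ₗ[k] V →ₗ[k] k) : Prop where
  swap₁₂ : ∀ x y z, T x y z = T y x z
  swap₂₃ : ∀ x y z, T x y z = T x z y

/-- The restriction of a trilinear form to a subspace. -/
def restrictTrilinear {k V : Type*} [Field k] [AddCommGroup V] [Module k V]
    (T : V →ₗ[k] V →ₗ[k] V →ₗ[k] k) (W : Submodule k V) : W →ₗ[k] W →ₗ[k] W →ₗ[k] k :=
  (T.compl₁₂ W.subtype W.subtype).compr₂ (LinearMap.lcomp k k W.subtype)

section CubicForms

variable {k V : Type*} [Field k] [AddCommGroup V] [Module k V]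
  {T : V →ₗ[k] V →ₗ[k] V →ₗ[k] k} {c : ℕ}

theorem HasQRankLE.mono {F : V → k} (h : HasQRankLE F c) {c' : ℕ} (hc : c ≤ c') :
    HasQRankLE F c' := by
  obtain ⟨m, hm, hF⟩ := h
  exact ⟨m, hm.trans hc, hF⟩

theorem IsSymmTrilinear.restrict (hT : IsSymmTrilinear T) (W : Submodule k V) :
    IsSymmTrilinear (restrictTrilinear T W) :=
  ⟨fun x y z => hT.swap₁₂ x y z, fun x y z => hT.swap₂₃ x y z⟩

theorem IsSymmTrilinear.isSymm (hT : IsSymmTrilinear T) (x : V) :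
    LinearMap.BilinForm.IsSymm (T x) :=
  ⟨hT.swap₂₃ x⟩

theorem IsSymmTrilinear.apply_add_self (hT : IsSymmTrilinear T) (x y : V) :
    T (x + y) (x + y) (x + y) = T y (x + y) (x + y) + T y x (x + y) + T y x x + T x x x := by
  simp only [map_add, LinearMap.add_apply, hT.swap₁₂ x y, hT.swap₂₃ x x y]
  ring

theorem HasQRankLE.of_submodule [FiniteDimensional k V] (hT : IsSymmTrilinear T)
    (W : Submodule k V) (h : HasQRankLE (fun x : W => T x x x) c) :
    HasQRankLE (fun x => T x x x) (Module.finrank k (V ⧸ W) + c) := by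
  obtain ⟨m, hm, ℓ, q, hq⟩ := h
  obtain ⟨W', hW⟩ := Submodule.exists_isCompl W
  let P : V →ₗ[k] W := W.projectionOnto W' hW
  let P' : V →ₗ[k] W' := W'.projectionOnto W hW.symm
  let ι : V →ₗ[k] V := W.subtype ∘ₗ P
  let b := Module.finBasis k W'
  refine ⟨Module.finrank k W' + m, ?_,
    Fin.append (fun j => b.coord j ∘ₗ P') (fun i => ℓ i ∘ₗ P),
    Fin.append (fun j => T (b j) + T (b j) ∘ₗ ι + (T (b j)).compl₁₂ ι ι)
      (fun i => (q i).compl₁₂ P P), fun x => ?_⟩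
  · rw [(W.quotientEquivOfIsCompl W' hW).finrank_eq]
    gcongr
  · have P_add_P' : (P x : V) + P' x = x := Submodule.projection_add_projection_eq_self hW x
    have P'_eq_sum : (P' x : V) = ∑ j, b.coord j (P' x) • (b j : V) := by
      have := congrArg W'.subtype (b.sum_repr (P' x)).symm
      rwa [map_sum] at this
    have expand := hT.apply_add_self (P x : V) (P' x)
    rw [P_add_P'] at expand
    simp only [Fin.sum_univ_add, Fin.append_left, Fin.append_right]
    rw [expand, show T (P x) (P x) (P x) = _ from hq (P x), P'_eq_sum]
    simp [ι, mul_add, Finset.sum_add_distrib]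

theorem HasQRankLE.of_ker [FiniteDimensional k V] {U : Type*} [AddCommGroup U] [Module k U]
    (hT : IsSymmTrilinear T) (φ : V →ₗ[k] U)
    (h : HasQRankLE (fun x : LinearMap.ker φ => T x x x) c) :
    HasQRankLE (fun x => T x x x) (Module.finrank k (LinearMap.range φ) + c) :=
  φ.quotKerEquivRange.finrank_eq ▸ HasQRankLE.of_submodule hT _ h

theorem HasQRankLE.of_ker_pi [FiniteDimensional k V] {ι : Type*} [Fintype ι]
    (hT : IsSymmTrilinear T) (α : ι → Module.Dual k V)
    (h : HasQRankLE (fun x : LinearMap.ker (LinearMap.pi α) => T x x x) c) :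
    HasQRankLE (fun x => T x x x) (Fintype.card ι + c) := by
  refine (HasQRankLE.of_ker hT _ h).mono (Nat.add_le_add_right ?_ c)
  simpa using (LinearMap.range (LinearMap.pi α)).finrank_le

open Polynomial in
theorem IsSymmTrilinear.apply_self_add_six_mul_eq_zero [Infinite k] (hT : IsSymmTrilinear T)
    {y₀ y₁ y₂ : V} (h : ∀ t : k, T (y₀ + t • y₁ + t ^ 2 • y₂) (y₀ + t • y₁ + t ^ 2 • y₂)
      (y₀ + t • y₁ + t ^ 2 • y₂) = 0) :
    T y₁ y₁ y₁ + 6 * T y₀ y₁ y₂ = 0 := by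
  let p : k[X] := C (T y₀ y₀ y₀) + C (3 * T y₀ y₀ y₁) * X +
    C (3 * T y₀ y₀ y₂ + 3 * T y₀ y₁ y₁) * X ^ 2 + C (T y₁ y₁ y₁ + 6 * T y₀ y₁ y₂) * X ^ 3 +
    C (3 * T y₁ y₁ y₂ + 3 * T y₀ y₂ y₂) * X ^ 4 + C (3 * T y₁ y₂ y₂) * X ^ 5 +
    C (T y₂ y₂ y₂) * X ^ 6
  have hp : p = 0 := Polynomial.funext fun t => by
    rw [eval_zero, ← h t]
    simp only [p, eval_add, eval_mul, eval_C, eval_X, eval_pow, map_add, map_smul,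
      LinearMap.add_apply, LinearMap.smul_apply, smul_eq_mul, hT.swap₁₂ y₁ y₀, hT.swap₁₂ y₂ y₀,
      hT.swap₁₂ y₂ y₁, hT.swap₂₃ _ y₁ y₀, hT.swap₂₃ _ y₂ y₀, hT.swap₂₃ _ y₂ y₁]
    ring
  have coeff_three : p.coeff 3 = T y₁ y₁ y₁ + 6 * T y₀ y₁ y₂ := by
    simp [p, coeff_X_pow, -map_add, -map_mul]
  rw [← coeff_three, hp, coeff_zero]

end CubicForms

section VanishingOnQuadrics

variable {k V : Type*} [Field k] [AddCommGroup V] [Module k V]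

theorem apply_self_sub_sum_eq_zero (h2 : (2 : k) ≠ 0) {ι : Type*} [Fintype ι] [DecidableEq ι]
    {B : ι → LinearMap.BilinForm k V} (hB : ∀ i, (B i).IsSymm) {u : ι → V}
    (isotropic : ∀ i j l, B i (u j) (u l) = 0) {y : V}
    (hy : ∀ i j, B i (u j) y = if i = j then 1 else 0) (i : ι) :
    B i (y - ∑ j, (B j y y / 2) • u j) (y - ∑ j, (B j y y / 2) • u j) = 0 := by
  simp only [map_sub, map_sum, map_smul, LinearMap.sub_apply, (hB i).eq y, LinearMap.coe_sum,
    LinearMap.coe_smul, Finset.sum_apply, Pi.smul_apply, hy, smul_eq_mul, mul_ite, mul_one,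
    mul_zero, Finset.sum_ite_eq, Finset.mem_univ, ↓reduceIte, isotropic, Finset.sum_const_zero,
    sub_zero]
  field_simp
  ring

theorem apply_self_eq_sum_of_vanishing [Infinite k] (h2 : (2 : k) ≠ 0)
    {T : V →ₗ[k] V →ₗ[k] V →ₗ[k] k} (hT : IsSymmTrilinear T) {ι : Type*} [Fintype ι]
    [DecidableEq ι] {B : ι → LinearMap.BilinForm k V} (hB : ∀ i, (B i).IsSymm)
    (vanishing : ∀ x, (∀ i, B i x x = 0) → T x x x = 0) {u : ι → V}
    (isotropic : ∀ i j l, B i (u j) (u l) = 0) {e : V}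
    (he : ∀ i j, B i (u j) e = if i = j then 1 else 0) {z : V}
    (huz : ∀ i j, B i (u j) z = 0) (hez : ∀ i, B i e z = 0) :
    T z z z = ∑ j, 3 * T (e - ∑ i, (B i e e / 2) • u i) (u j) z * B j z z := by
  -- The curve `e + t • z`, corrected along the `u i` so as to lie on all the quadrics, is
  -- `y₀ + t • z + t ^ 2 • y₂`; the claim is the coefficient of `t ^ 3` of `T` along it.
  set y₀ := e - ∑ i, (B i e e / 2) • u i with hy₀
  set y₂ := -∑ i, (B i z z / 2) • u i with hy₂
  have vanishing_curve (t : k) : T (y₀ + t • z + t ^ 2 • y₂) (y₀ + t • z + t ^ 2 • y₂)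
      (y₀ + t • z + t ^ 2 • y₂) = 0 := by
    have corrected : y₀ + t • z + t ^ 2 • y₂ =
        e + t • z - ∑ j, (B j (e + t • z) (e + t • z) / 2) • u j := by
      have self (j : ι) : B j (e + t • z) (e + t • z) = B j e e + t ^ 2 * B j z z := by
        simp only [map_add, map_smul, LinearMap.add_apply, hez, smul_eq_mul, mul_zero, add_zero,
          LinearMap.smul_apply, (hB j).eq z e, zero_add, add_right_inj]
        ring
      simp only [hy₀, hy₂, self, add_div, add_smul, mul_div_assoc, mul_smul,
        Finset.sum_add_distrib, Finset.smul_sum, smul_neg]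
      abel
    rw [corrected]
    exact vanishing _ (apply_self_sub_sum_eq_zero h2 hB isotropic (by simp [he, huz]))
  have coeff := hT.apply_self_add_six_mul_eq_zero vanishing_curve
  have T_y₂ : T y₀ z y₂ = -∑ j, B j z z / 2 * T y₀ (u j) z := by
    simp [hy₂, hT.swap₂₃ y₀ z]
  rw [T_y₂] at coeff
  rw [eq_neg_of_add_eq_zero_left coeff, mul_neg, neg_neg, Finset.mul_sum]
  refine Finset.sum_congr rfl fun j _ => ?_
  field_simp
  ring

variable [IsAlgClosed k] [FiniteDimensional k V] {T : V →ₗ[k] V →ₗ[k] V →ₗ[k] k} {s : ℕ}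
  {B : Fin s → LinearMap.BilinForm k V}

theorem hasQRankLE_of_vanishing_of_le_finrank_range (h2 : (2 : k) ≠ 0)
    (hT : IsSymmTrilinear T) (hB : ∀ i, (B i).IsSymm)
    (vanishing : ∀ x, (∀ i, B i x x = 0) → T x x x = 0)
    (hrank : ∀ l : Fin s → k, l ≠ 0 →
      s * ((s + 1) * s) ≤ Module.finrank k (LinearMap.range (∑ i, l i • B i))) :
    HasQRankLE (fun x => T x x x) (s * s + s + s) := by
  have : Infinite k := IsAlgClosed.instInfinite
  obtain ⟨u, isotropic, independent⟩ := exists_isotropic_linearIndependent_apply (m := s) hB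
    (by simpa using hrank)
  obtain ⟨e, he⟩ := exists_forall_apply_eq independent fun p => if p.1 = p.2 then 1 else 0
  let α : Fin s × Fin s ⊕ Fin s → Module.Dual k V :=
    Sum.elim (fun p => B p.1 (u p.2)) fun i => B i e
  let W := LinearMap.ker (LinearMap.pi α)
  let ℓ : Fin s → Module.Dual k V := fun j => (3 : k) • T (e - ∑ i, (B i e e / 2) • u i) (u j)
  have on_ker : HasQRankLE (fun x : W => T x x x) s :=
    ⟨s, le_rfl, fun j => ℓ j ∘ₗ W.subtype, fun j => (B j).restrict W, fun z =>
      apply_self_eq_sum_of_vanishing h2 hT hB vanishing isotropic (fun i j => he (i, j))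
        (fun i j => congrFun z.2 (.inl (i, j))) fun i => congrFun z.2 (.inr i)⟩
  simpa using HasQRankLE.of_ker_pi hT α on_ker

theorem hasQRankLE_of_vanishing (h2 : (2 : k) ≠ 0) (hT : IsSymmTrilinear T)
    (hB : ∀ i, (B i).IsSymm)
    (vanishing : ∀ x, (∀ i, B i x x = 0) → T x x x = 0) :
    HasQRankLE (fun x => T x x x) (3 * s ^ 4) := by
  induction s generalizing V with
  | zero => exact ⟨0, le_rfl, Fin.elim0, Fin.elim0, fun x => by simpa using vanishing x nofun⟩
  | succ s ih =>
    by_cases hrank : ∀ l : Fin (s + 1) → k, l ≠ 0 → (s + 1) * ((s + 1 + 1) * (s + 1)) ≤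
        Module.finrank k (LinearMap.range (∑ i, l i • B i))
    · refine (hasQRankLE_of_vanishing_of_le_finrank_range h2 hT hB vanishing hrank).mono ?_
      ring_nf
      lia
    push Not at hrank
    obtain ⟨l, hl, hrank⟩ := hrank
    obtain ⟨a, ha⟩ := Function.ne_iff.1 hl
    let W := LinearMap.ker (∑ i, l i • B i)
    have on_ker : HasQRankLE (fun x : W => T x x x) (3 * s ^ 4) := by
      refine ih (hT.restrict W) (B := fun i => (B (a.succAbove i)).restrict W)
        (fun i => (hB _).restrict W) fun x hx => vanishing x ?_
      have relation : (∑ i, l i • B i) x x = 0 := by rw [LinearMap.mem_ker.1 x.2]; rfl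
      refine (Fin.forall_iff_succAbove a).2 ⟨?_, hx⟩
      have hx' : ∀ i, B (a.succAbove i) x x = 0 := hx
      refine (mul_eq_zero.1 ?_).resolve_left ha
      simpa [Fin.sum_univ_succAbove _ a, hx'] using relation
    have bound : (s + 1) * ((s + 1 + 1) * (s + 1)) + 3 * s ^ 4 ≤ 3 * (s + 1) ^ 4 := by
      ring_nf
      lia
    exact (HasQRankLE.of_ker hT _ on_ker).mono ((Nat.add_le_add_right hrank.le _).trans bound)

theorem exists_apply_self_ne_zero (h2 : (2 : k) ≠ 0) (hT : IsSymmTrilinear T)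
    (hB : ∀ i, (B i).IsSymm) {ι : Type*} [Fintype ι] (α : ι → Module.Dual k V)
    (h : ¬ HasQRankLE (fun x => T x x x) (Fintype.card ι + 3 * s ^ 4)) :
    ∃ x, (∀ a, α a x = 0) ∧ (∀ i, B i x x = 0) ∧ T x x x ≠ 0 := by
  by_contra! vanishing
  let W := LinearMap.ker (LinearMap.pi α)
  refine h (HasQRankLE.of_ker_pi hT α ?_)
  exact hasQRankLE_of_vanishing h2 (hT.restrict W) (fun i => (hB i).restrict W) fun x hx =>
    vanishing x (fun a => congrFun x.2 a) hx

theorem exists_diagonal_of_not_hasQRankLE (h2 : (2 : k) ≠ 0) (hT : IsSymmTrilinear T) {m : ℕ}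
    (h : ¬ HasQRankLE (fun x => T x x x) (4 * m ^ 4)) :
    ∃ v : Fin m → V, ∀ i j l, T (v i) (v j) (v l) = if i = j ∧ j = l then 1 else 0 := by
  induction m with
  | zero => exact ⟨Fin.elim0, fun i => i.elim0⟩
  | succ m ih =>
    obtain ⟨v, hv⟩ := ih fun h' => h (h'.mono (by gcongr; lia))
    obtain ⟨x, vvx, vxx, xxx⟩ := exists_apply_self_ne_zero h2 hT (fun i => hT.isSymm (v i))
      (fun p : Fin m × Fin m => T (v p.1) (v p.2))
      (fun h' => h (h'.mono (by rw [Fintype.card_prod, Fintype.card_fin]; nlinarith)))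
    obtain ⟨c, hc⟩ := IsAlgClosed.exists_pow_nat_eq (T x x x)⁻¹ (n := 3) (by norm_num)
    have scaled : c * (c * (c * T x x x)) = 1 := by
      rw [← inv_mul_cancel₀ xxx, ← hc]
      ring
    refine ⟨Fin.cons (c • x) v, fun i j l => ?_⟩
    cases i using Fin.cases <;> cases j using Fin.cases <;> cases l using Fin.cases <;>
      simp [hv, scaled, hT.swap₁₂ x, hT.swap₂₃ _ x, vxx, fun i j => vvx (i, j), Fin.succ_ne_zero,
        (Fin.succ_ne_zero _).symm]

end VanishingOnQuadrics

section Polarization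

open MvPolynomial

theorem pderiv_pderiv_comm {R σ : Type*} [CommRing R] (i j : σ) (f : MvPolynomial σ R) :
    pderiv i (pderiv j f) = pderiv j (pderiv i f) := by
  classical
  have commutator_eq_zero : ⁅pderiv (R := R) i, pderiv (R := R) j⁆ = 0 :=
    derivation_ext fun a => by
      simp only [Derivation.commutator_apply, pderiv_X, Pi.single_apply]
      split_ifs <;> simp
  exact sub_eq_zero.1 (by rw [← Derivation.commutator_apply, commutator_eq_zero]; rfl)

theorem coeff_zero_eq_eval {R σ : Type*} [CommSemiring R] {f : MvPolynomial σ R}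
    (hf : f.IsHomogeneous 0) (x : σ → R) : coeff 0 f = eval x f := by
  rw [← totalDegree_zero_iff_isHomogeneous, totalDegree_eq_zero_iff_eq_C] at hf
  rw [hf, eval_C, coeff_zero_C]

theorem sum_mul_eval_pderiv {R σ : Type*} [CommSemiring R] [Fintype σ] {m : ℕ}
    {f : MvPolynomial σ R} (hf : f.IsHomogeneous m) (x : σ → R) :
    ∑ i, x i * eval x (pderiv i f) = m * eval x f := by
  simpa using congrArg (eval x) hf.sum_X_mul_pderiv

variable {k σ : Type*} [Field k] [Fintype σ]

/-- The trilinear form whose coefficients are the third partial derivatives of `f` divided by `6`.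
It is the polarization of `f` when `f` is a cubic form and `6` is invertible. -/
noncomputable def cubicPolarization (f : MvPolynomial σ k) :
    (σ → k) →ₗ[k] (σ → k) →ₗ[k] (σ → k) →ₗ[k] k :=
  ∑ i, ∑ j, ∑ l, ((6 : k)⁻¹ * coeff 0 (pderiv l (pderiv j (pderiv i f)))) •
    (LinearMap.proj (R := k) (φ := fun _ : σ => k) i).smulRight
      ((LinearMap.proj (R := k) (φ := fun _ : σ => k) j).smulRight (LinearMap.proj l))

theorem cubicPolarization_apply (f : MvPolynomial σ k) (x y z : σ → k) :
    cubicPolarization f x y z = ∑ i, ∑ j, ∑ l,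
      (6 : k)⁻¹ * coeff 0 (pderiv l (pderiv j (pderiv i f))) * (x i * (y j * z l)) := by
  simp [cubicPolarization, LinearMap.sum_apply]

theorem isSymmTrilinear_cubicPolarization (f : MvPolynomial σ k) :
    IsSymmTrilinear (cubicPolarization f) where
  swap₁₂ x y z := by
    simp only [cubicPolarization_apply]
    rw [Finset.sum_comm]
    refine Fintype.sum_congr _ _ fun i => Fintype.sum_congr _ _ fun j =>
      Fintype.sum_congr _ _ fun l => ?_
    rw [pderiv_pderiv_comm i j]
    ring
  swap₂₃ x y z := by
    simp only [cubicPolarization_apply]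
    refine Fintype.sum_congr _ _ fun i => ?_
    rw [Finset.sum_comm]
    refine Fintype.sum_congr _ _ fun j => Fintype.sum_congr _ _ fun l => ?_
    rw [pderiv_pderiv_comm j l]
    ring

theorem cubicPolarization_apply_self (h6 : (6 : k) ≠ 0) {f : MvPolynomial σ k}
    (hf : f.IsHomogeneous 3) (x : σ → k) : cubicPolarization f x x x = eval x f := by
  have euler₁ := sum_mul_eval_pderiv hf x
  have euler₂ (i : σ) := sum_mul_eval_pderiv (hf.pderiv (i := i)) x
  have euler₃ (i j : σ) := sum_mul_eval_pderiv ((hf.pderiv (i := i)).pderiv (i := j)) x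
  have eval_third (i j l : σ) : coeff 0 (pderiv l (pderiv j (pderiv i f))) =
      eval x (pderiv l (pderiv j (pderiv i f))) :=
    coeff_zero_eq_eval hf.pderiv.pderiv.pderiv x
  calc cubicPolarization f x x x
      = 6⁻¹ * ∑ i, x i * ∑ j, x j * ∑ l, x l * eval x (pderiv l (pderiv j (pderiv i f))) := by
        simp only [cubicPolarization_apply, eval_third, Finset.mul_sum]
        refine Fintype.sum_congr _ _ fun i => Fintype.sum_congr _ _ fun j =>
          Fintype.sum_congr _ _ fun l => by ring
    _ = 6⁻¹ * (6 * eval x f) := by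
        simp_rw [euler₃, Nat.reduceSub, Nat.cast_one, one_mul, euler₂, mul_left_comm (x _),
          ← Finset.mul_sum, euler₁]
        push_cast
        ring
    _ = eval x f := inv_mul_cancel_left₀ h6 _

end Polarization

section QRank

open MvPolynomial

variable {k : Type*} [Field k] {n : ℕ}

theorem polyQRank_le_of_hasQRankLE [Infinite k] {f : MvPolynomial (Fin n) k} {c : ℕ}
    (h : HasQRankLE (fun x => eval x f) c) : polyQRank f ≤ c := by
  obtain ⟨m, hm, ℓ, q, hq⟩ := h
  refine le_trans (sInf_le ?_) (Nat.cast_le.2 hm)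
  refine ⟨m, rfl, (LinearMap.toMatrix' (LinearMap.pi ℓ)).toMvPolynomial,
    fun i => quadraticPolynomial (Pi.basisFun k (Fin n)) (q i),
    Matrix.toMvPolynomial_isHomogeneous _, fun i => isHomogeneous_quadraticPolynomial _ _,
    MvPolynomial.funext fun x => ?_⟩
  simp only [map_sum, map_mul, eval_quadraticPolynomial, Matrix.toMvPolynomial_eval_eq_apply,
    LinearMap.toMatrix'_mulVec, LinearMap.pi_apply]
  exact hq x

end QRank

section SumOfCubes

theorem apply_self_eq_sum_coord {k V ι : Type*} [Field k] [AddCommGroup V] [Module k V]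
    [Fintype ι] (b : Module.Basis ι k V) (T : V →ₗ[k] V →ₗ[k] V →ₗ[k] k) (x : V) :
    T x x x = ∑ i, ∑ j, ∑ l,
      T (b i) (b j) (b l) * (b.coord i x * (b.coord j x * b.coord l x)) := by
  conv_lhs => rw [← b.sum_repr x]
  simp only [map_sum, map_smul, LinearMap.sum_apply, LinearMap.smul_apply, smul_eq_mul,
    Finset.mul_sum, Module.Basis.coord_apply]
  rw [Finset.sum_comm_cycle]
  refine Fintype.sum_congr _ _ fun i => ?_
  rw [Finset.sum_comm]
  exact Fintype.sum_congr _ _ fun j => Fintype.sum_congr _ _ fun l => by ring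

variable {k V : Type*} [Field k] [IsAlgClosed k] [AddCommGroup V] [Module k V]

-- `24xyz = (x + y + z)³ - (x + y - z)³ - (x - y + z)³ - (-x + y + z)³`
theorem exists_four_cubes (h6 : (6 : k) ≠ 0) (α β γ : Module.Dual k V) (c : k) :
    ∃ L : Fin 4 → Module.Dual k V, ∀ x, c * (α x * (β x * γ x)) = ∑ a, L a x ^ 3 := by
  have h24 : (24 : k) ≠ 0 := by
    have h2 : (2 : k) ≠ 0 := fun h => h6 (by linear_combination 3 * h)
    convert mul_ne_zero h6 (mul_ne_zero h2 h2) using 1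
    norm_num
  obtain ⟨r, hr⟩ := IsAlgClosed.exists_pow_nat_eq (c / 24) (n := 3) (by norm_num)
  refine ⟨![r • (α + β + γ), -r • (α + β - γ), -r • (α - β + γ), -r • (-α + β + γ)], fun x => ?_⟩
  have hc : c = 24 * r ^ 3 := by rw [hr, mul_div_cancel₀ _ h24]
  simp only [hc, Fin.sum_univ_four, Matrix.cons_val, LinearMap.smul_apply, LinearMap.add_apply,
    LinearMap.sub_apply, LinearMap.neg_apply, smul_eq_mul]
  ring

theorem exists_sum_cubes (h6 : (6 : k) ≠ 0) {d : ℕ} (b : Module.Basis (Fin d) k V)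
    (T : V →ₗ[k] V →ₗ[k] V →ₗ[k] k) :
    ∃ L : Fin (4 * d ^ 3) → Module.Dual k V, ∀ x, T x x x = ∑ a, L a x ^ 3 := by
  choose L hL using fun i j l =>
    exists_four_cubes h6 (b.coord i) (b.coord j) (b.coord l) (T (b i) (b j) (b l))
  have card_eq : Fintype.card ((Fin d × Fin d × Fin d) × Fin 4) = 4 * d ^ 3 := by
    simp only [Fintype.card_prod, Fintype.card_fin]
    ring
  let e := Fintype.equivFinOfCardEq card_eq
  refine ⟨fun a => L (e.symm a).1.1 (e.symm a).1.2.1 (e.symm a).1.2.2 (e.symm a).2, fun x => ?_⟩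
  rw [e.symm.sum_comp (fun a => L a.1.1 a.1.2.1 a.1.2.2 a.2 x ^ 3)]
  simp only [Fintype.sum_prod_type, ← hL]
  exact apply_self_eq_sum_coord b T x

theorem apply_sum_smul_self_of_diagonal {k V ι : Type*} [Field k] [AddCommGroup V] [Module k V]
    [Fintype ι] [DecidableEq ι] {T : V →ₗ[k] V →ₗ[k] V →ₗ[k] k} {v : ι → V}
    (hv : ∀ i j l, T (v i) (v j) (v l) = if i = j ∧ j = l then 1 else 0) (c : ι → k) :
    T (∑ i, c i • v i) (∑ i, c i • v i) (∑ i, c i • v i) = ∑ i, c i ^ 3 := by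
  simp [LinearMap.sum_apply, hv, ite_and, pow_three]

end SumOfCubes

section ZariskiClosure

open MvPolynomial

variable {k : Type*} [Field k] {n : ℕ}

theorem glAct_eq_bind₁_toMvPolynomial (g : GL (Fin n) k) (f : MvPolynomial (Fin n) k) :
    glAct g f = bind₁ g.1.transpose.toMvPolynomial f := by
  simp only [glAct, aeval_eq_bind₁, C_mul_X_eq_monomial]
  rfl

theorem bind₁_toMvPolynomial_mem_glOrbit {M : Matrix (Fin n) (Fin n) k} (hM : M.det ≠ 0)
    (f : MvPolynomial (Fin n) k) : bind₁ M.toMvPolynomial f ∈ glOrbit f := by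
  refine ⟨.mkOfDetNeZero M.transpose (by rwa [Matrix.det_transpose]), ?_⟩
  rw [glAct_eq_bind₁_toMvPolynomial]
  rfl

theorem eval_restrictVars {d : ℕ} (y : Fin d → k) (f : MvPolynomial (Fin n) k) :
    eval y (restrictVars d f) =
      eval (fun i : Fin n => if h : (i : ℕ) < d then y ⟨i, h⟩ else 0) f := by
  rw [restrictVars, aeval_eq_bind₁, eval_bind₁]
  congr! 3 with i
  split_ifs <;> simp

theorem evalRingHom_comp_C (t : k) :
    (Polynomial.evalRingHom t).comp Polynomial.C = RingHom.id k :=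
  RingHom.ext fun _ => Polynomial.eval_C

theorem polynomial_eval_eval_map_C {σ : Type*} (t : k) (c : σ → Polynomial k)
    (P : MvPolynomial σ k) :
    (eval c (map Polynomial.C P)).eval t = eval (fun m => (c m).eval t) P := by
  rw [eval_map, ← Polynomial.coe_evalRingHom, hom_eval₂, evalRingHom_comp_C]
  rfl

-- `M + t • 1` is invertible for all but finitely many `t`.
theorem inZariskiClosure_glOrbit_bind₁ [Infinite k] (M : Matrix (Fin n) (Fin n) k)
    (f : MvPolynomial (Fin n) k) :
    InZariskiClosure (glOrbit f) (bind₁ M.toMvPolynomial f) := by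
  intro P hP
  let N : Matrix (Fin n) (Fin n) (Polynomial k) :=
    (Polynomial.X : Polynomial k) • 1 + M.map Polynomial.C
  let Q : Polynomial k :=
    eval (fun m => coeff m (bind₁ N.toMvPolynomial (map Polynomial.C f))) (map Polynomial.C P)
  have N_map_eval (t : k) : N.map (Polynomial.evalRingHom t) = t • 1 + M := by
    ext i j
    by_cases h : i = j <;> simp [N, h]
  have eval_Q (t : k) :
      Q.eval t = eval (fun m => coeff m (bind₁ (t • 1 + M).toMvPolynomial f)) P := by
    have map_family : map (Polynomial.evalRingHom t)
        (bind₁ N.toMvPolynomial (map Polynomial.C f)) = bind₁ (t • 1 + M).toMvPolynomial f := by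
      simp_rw [map_bind₁, ← Matrix.toMvPolynomial_map, N_map_eval, map_map,
        evalRingHom_comp_C, map_id]
    simp only [Q, polynomial_eval_eval_map_C, ← map_family, coeff_map, Polynomial.coe_evalRingHom]
  have det_ne_zero : N.det ≠ 0 := by
    rw [← Polynomial.leadingCoeff_ne_zero, Polynomial.leadingCoeff_det_X_one_add_C]
    exact one_ne_zero
  have det_mul_Q : N.det * Q = 0 := Polynomial.funext fun t => by
    rw [Polynomial.eval_mul, Polynomial.eval_zero, mul_eq_zero, or_iff_not_imp_left]
    intro det_eval
    rw [← Polynomial.coe_evalRingHom, RingHom.map_det, RingHom.mapMatrix_apply,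
      N_map_eval] at det_eval
    rw [eval_Q]
    exact hP _ (bind₁_toMvPolynomial_mem_glOrbit det_eval f)
  have Q_eq_zero : Q = 0 := (mul_eq_zero.1 det_mul_Q).resolve_left det_ne_zero
  simpa [Q_eq_zero] using (eval_Q 0).symm

theorem exists_inZariskiClosure_glOrbit_restrictVars_eq [Infinite k] {d : ℕ} (hdn : d ≤ n)
    {f : MvPolynomial (Fin n) k} {h : MvPolynomial (Fin d) k}
    (φ : (Fin d → k) →ₗ[k] (Fin n → k)) (hφ : ∀ y, eval (φ y) f = eval y h) :
    ∃ g, InZariskiClosure (glOrbit f) g ∧ restrictVars d g = h := by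
  let A : (Fin n → k) →ₗ[k] (Fin n → k) := φ ∘ₗ LinearMap.funLeft k k (Fin.castLE hdn)
  refine ⟨_, inZariskiClosure_glOrbit_bind₁ (LinearMap.toMatrix' A) f,
    MvPolynomial.funext fun y => ?_⟩
  have A_apply : A (fun i => if h : (i : ℕ) < d then y ⟨i, h⟩ else 0) = φ y :=
    congrArg φ (funext fun i => by simp [LinearMap.funLeft_apply])
  simp only [eval_restrictVars, eval_bind₁, Matrix.toMvPolynomial_eval_eq_apply,
    LinearMap.toMatrix'_mulVec]
  exact A_apply ▸ hφ y

end ZariskiClosure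

theorem mul_pow_twelve_lt {r d : ℕ} (hr : Real.exp 240 < r) (hd : (d : ℝ) < Real.log r / 3) :
    1024 * d ^ 12 < r := by
  have hr₀ : (0 : ℝ) < r := (Real.exp_pos _).trans hr
  let x := Real.log r
  have hx : 240 < x := (Real.lt_log_iff_exp_lt hr₀).2 hr
  have : (1024 * d ^ 12 : ℝ) < r :=
    calc (1024 * d ^ 12 : ℝ) ≤ 1024 * (x / 3) ^ 12 := by gcongr
      _ = x ^ 12 * (1024 / 3 ^ 12) := by ring
      _ < x ^ 12 * (240 ^ 8 / Nat.factorial 20) := by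
        refine mul_lt_mul_of_pos_left ?_ (by positivity)
        norm_num [Nat.factorial]
      _ ≤ x ^ 12 * (x ^ 8 / Nat.factorial 20) := by gcongr
      _ = x ^ 20 / Nat.factorial 20 := by ring
      _ ≤ Real.exp x := Real.pow_div_factorial_le_exp x (by linarith) 20
      _ = r := Real.exp_log hr₀
  exact_mod_cast this

theorem orbit_closure_surjects_log_general {k : Type*} [Field k] [IsAlgClosed k]
    (h2 : (2 : k) ≠ 0) (h3 : (3 : k) ≠ 0) {n : ℕ}
    (f : MvPolynomial (Fin n) k) (hf : f.IsHomogeneous 3)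
    (d : ℕ) (hd : ((1024 * d ^ 12 : ℕ) : ℕ∞) < polyQRank f) (hdn : d ≤ n) :
    ∀ h : MvPolynomial (Fin d) k, h.IsHomogeneous 3 →
      ∃ g : MvPolynomial (Fin n) k,
        InZariskiClosure (glOrbit f) g ∧ restrictVars d g = h := by
  intro h hh
  have : Infinite k := IsAlgClosed.instInfinite
  have h6 : (6 : k) ≠ 0 := by convert mul_ne_zero h2 h3 using 1; norm_num
  have large_rank :
      ¬ HasQRankLE (fun x => cubicPolarization f x x x) (4 * (4 * d ^ 3) ^ 4) := fun H => by
    simp only [cubicPolarization_apply_self h6 hf] at H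
    exact (polyQRank_le_of_hasQRankLE H).not_gt (by ring_nf at hd ⊢; exact hd)
  obtain ⟨v, hv⟩ :=
    exists_diagonal_of_not_hasQRankLE h2 (isSymmTrilinear_cubicPolarization f) large_rank
  obtain ⟨L, hL⟩ := exists_sum_cubes h6 (Pi.basisFun k (Fin d)) (cubicPolarization h)
  let φ : (Fin d → k) →ₗ[k] (Fin n → k) := ∑ a, (L a).smulRight (v a)
  have eval_φ (y : Fin d → k) : MvPolynomial.eval (φ y) f = MvPolynomial.eval y h := by
    rw [← cubicPolarization_apply_self h6 hf, ← cubicPolarization_apply_self h6 hh, hL,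
      ← apply_sum_smul_self_of_diagonal hv]
    simp [φ, LinearMap.sum_apply]
  exact exists_inZariskiClosure_glOrbit_restrictVars_eq hdn φ eval_φ

/-- Logarithmic surjectivity bound: if `f ∈ P₃(kⁿ)` has q-rank `r > exp 240` and
`0 < d ≤ n` with `d < (1/3) log r`, then the Zariski closure of the `GLₙ(k)`-orbit
of `f` surjects onto `P₃(k^d)`. -/
theorem orbit_closure_surjects_log {k : Type*} [Field k] [IsAlgClosed k]
    (h2 : (2 : k) ≠ 0) (h3 : (3 : k) ≠ 0) {n : ℕ}
    (f : MvPolynomial (Fin n) k) (hf : f.IsHomogeneous 3)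
    (r : ℕ) (hr : polyQRank f = (r : ℕ∞)) (hrbig : Real.exp 240 < (r : ℝ))
    (d : ℕ) (hd : 0 < d) (hdn : d ≤ n) (hlog : (d : ℝ) < Real.log r / 3) :
    ∀ h : MvPolynomial (Fin d) k, h.IsHomogeneous 3 →
      ∃ g : MvPolynomial (Fin n) k,
        InZariskiClosure (glOrbit f) g ∧ restrictVars d g = h := by
  exact orbit_closure_surjects_log_general h2 h3 f hf d
    (hr ▸ Nat.cast_lt.2 (mul_pow_twelve_lt hrbig hlog)) hdn
end

section
/- Inverse limits of proper varieties: let k be an algebraically closed field, let I be a nonempty directed partially ordered set, and let {Z_i}_{i ∈ I} be an inverse system of schemes over Spec k (with k-morphisms Z_j → Z_i for i ≤ j, compatible with composition), where each Z_i is a nonempty reduced scheme of finite type over k whose structure morphism Z_i → Spec k is proper. Then the inverse limit of the sets of k-points, lim_{i ∈ I} Z_i(k) (where Z_i(k) denotes k-scheme morphisms Spec k → Z_i), is nonempty; i.e. there is a family of k-points z_i ∈ Z_i(k) with z_i equal to the image of z_j under the transition map whenever i ≤ j. -/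
open CategoryTheory AlgebraicGeometry Opposite

/-!
A closed point of a finite type scheme over an algebraically closed field is the same thing as a
rational point, so it suffices to find a compatible family of closed points. By Zorn's lemma and
compactness there is a minimal family `C` of nonempty closed subsets stable under the transition
maps. The transition maps, being morphisms between proper schemes, are closed. So, given `T ⊆ Z i`
closed, the sets `a (C l ∩ b⁻¹ T)` over all spans `a : l → j`, `b : l → i` are closed, and they are
directed; if they are nonempty then their intersections form a smaller such family, hence equal
`C`. Taking `T = Z i` shows that the maps `C l → C j` are surjective, and taking `T` to be a closed
point of `C i` then shows that `C i` is that point.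
-/

universe u v w

section Topology

variable {J : Type u} [Category.{v} J] (F : J ⥤ TopCat.{w})

/-- A family of nonempty closed subsets `C j ⊆ F.obj j` that is stable under the transition maps,
i.e. a diagram of nonempty closed subspaces of `F`. The minimal ones for pointwise inclusion
consist of compatible closed points, see `exists_eq_singleton_of_minimal`. -/
structure IsNonemptyClosedSubsystem (C : ∀ j, Set (F.obj j)) : Prop where
  isClosed (j : J) : IsClosed (C j)
  nonempty (j : J) : (C j).Nonempty
  mapsTo {i j : J} (f : i ⟶ j) : Set.MapsTo (F.map f) (C i) (C j)

/-- The points of `F.obj j` that, for every span `j ← l → i`, lift to a point of `C l` lying over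
`T ⊆ F.obj i`. Spans are encoded as elements of a sigma type so that this is a single
intersection, to which Cantor's intersection theorem applies. -/
def spanInter (C : ∀ j, Set (F.obj j)) {i : J} (T : Set (F.obj i)) (j : J) : Set (F.obj j) :=
  ⋂ s : Σ l, (l ⟶ j) × (l ⟶ i), F.map s.2.1 '' (C s.1 ∩ F.map s.2.2 ⁻¹' T)

variable {F} {C : ∀ j, Set (F.obj j)}

theorem mem_spanInter {i j : J} {T : Set (F.obj i)} {x : F.obj j} :
    x ∈ spanInter F C T j ↔
      ∀ (l : J) (a : l ⟶ j) (b : l ⟶ i), ∃ y ∈ C l, F.map b y ∈ T ∧ F.map a y = x := by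
  simp only [spanInter, Set.mem_iInter, Sigma.forall, Prod.forall, Set.mem_image, Set.mem_inter_iff,
    Set.mem_preimage, and_assoc]

theorem isNonemptyClosedSubsystem_univ [∀ j, Nonempty (F.obj j)] :
    IsNonemptyClosedSubsystem F fun _ ↦ Set.univ where
  isClosed _ := isClosed_univ
  nonempty _ := Set.univ_nonempty
  mapsTo _ := Set.mapsTo_univ _ _

theorem isNonemptyClosedSubsystem_iInter [∀ j, CompactSpace (F.obj j)] {ι : Type*} [Nonempty ι]
    {D : ι → ∀ j, Set (F.obj j)} (directed : Directed (· ≥ ·) D)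
    (hD : ∀ s, IsNonemptyClosedSubsystem F (D s)) :
    IsNonemptyClosedSubsystem F fun j ↦ ⋂ s, D s j where
  isClosed j := isClosed_iInter fun s ↦ (hD s).isClosed j
  nonempty j :=
    IsCompact.nonempty_iInter_of_directed_nonempty_isCompact_isClosed _
      (fun s t ↦ (directed s t).imp fun _ h ↦ ⟨h.1 j, h.2 j⟩) (fun s ↦ (hD s).nonempty j)
      (fun s ↦ ((hD s).isClosed j).isCompact) fun s ↦ (hD s).isClosed j
  mapsTo f := Set.mapsTo_iInter_iInter fun s ↦ (hD s).mapsTo f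

theorem exists_minimal_isNonemptyClosedSubsystem [∀ j, CompactSpace (F.obj j)]
    [∀ j, Nonempty (F.obj j)] :
    ∃ C : ∀ j, Set (F.obj j), Minimal (IsNonemptyClosedSubsystem F) C := by
  suffices lower_bound : ∀ c ⊆ {C | IsNonemptyClosedSubsystem F C}, IsChain (· ≥ ·) c →
      ∀ D ∈ c, ∃ E, IsNonemptyClosedSubsystem F E ∧ ∀ D ∈ c, E ≤ D by
    obtain ⟨C, -, hC⟩ := @zorn_le_nonempty₀ (∀ j, Set (F.obj j))ᵒᵈ _
      {C | IsNonemptyClosedSubsystem F C} lower_bound _ isNonemptyClosedSubsystem_univ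
    exact ⟨C, hC⟩
  intro c hcF hc D hD
  have : Nonempty c := ⟨⟨D, hD⟩⟩
  exact ⟨_, isNonemptyClosedSubsystem_iInter hc.directed fun s : c ↦ hcF s.2,
    fun E hE j ↦ Set.iInter_subset (fun s : c ↦ (s : ∀ j, Set (F.obj j)) j) ⟨E, hE⟩⟩

theorem IsNonemptyClosedSubsystem.spanInter_subset [IsCofilteredOrEmpty J]
    (hC : IsNonemptyClosedSubsystem F C) {i : J} (T : Set (F.obj i)) (j : J) :
    spanInter F C T j ⊆ C j := by
  intro x hx
  obtain ⟨l, a, b, -⟩ := IsCofilteredOrEmpty.cone_objs j i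
  obtain ⟨y, hy, -, rfl⟩ := mem_spanInter.1 hx l a b
  exact hC.mapsTo a hy

theorem IsNonemptyClosedSubsystem.directed_image_inter_preimage [IsCofilteredOrEmpty J]
    (hC : IsNonemptyClosedSubsystem F C) {i : J} (T : Set (F.obj i)) (j : J) :
    Directed (· ⊇ ·) fun s : Σ l, (l ⟶ j) × (l ⟶ i) ↦
      F.map s.2.1 '' (C s.1 ∩ F.map s.2.2 ⁻¹' T) := by
  rintro ⟨l₁, a₁, b₁⟩ ⟨l₂, a₂, b₂⟩
  obtain ⟨m, c₁, c₂, ha, hb⟩ := IsCofiltered.bowtie a₁ a₂ b₁ b₂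
  refine ⟨⟨m, c₁ ≫ a₁, c₁ ≫ b₁⟩, ?_, ?_⟩
  · rintro _ ⟨y, ⟨hy, hyT⟩, rfl⟩
    exact ⟨F.map c₁ y, ⟨hC.mapsTo c₁ hy, by simpa using hyT⟩, by simp⟩
  · rintro _ ⟨y, ⟨hy, hyT⟩, rfl⟩
    exact ⟨F.map c₂ y, ⟨hC.mapsTo c₂ hy, by simpa [hb] using hyT⟩, by simp [ha]⟩

theorem IsNonemptyClosedSubsystem.mapsTo_spanInter [IsCofilteredOrEmpty J]
    (hC : IsNonemptyClosedSubsystem F C) {i : J} (T : Set (F.obj i)) {j j' : J} (f : j ⟶ j') :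
    Set.MapsTo (F.map f) (spanInter F C T j) (spanInter F C T j') := by
  intro x hx
  refine mem_spanInter.2 fun l a b ↦ ?_
  obtain ⟨m, c, d, hcd⟩ := IsCofiltered.cospan a f
  obtain ⟨y, hy, hyT, rfl⟩ := mem_spanInter.1 hx m d (c ≫ b)
  refine ⟨F.map c y, hC.mapsTo c hy, by simpa using hyT, ?_⟩
  simp only [← ConcreteCategory.comp_apply, ← F.map_comp, hcd]

theorem isNonemptyClosedSubsystem_spanInter [IsCofilteredOrEmpty J]
    [∀ j, CompactSpace (F.obj j)] (hC : IsNonemptyClosedSubsystem F C)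
    (isClosedMap : ∀ ⦃i j : J⦄ (f : i ⟶ j), IsClosedMap (F.map f)) {i : J}
    {T : Set (F.obj i)} (hT : IsClosed T)
    (hCT : ∀ ⦃l : J⦄ (b : l ⟶ i), (C l ∩ F.map b ⁻¹' T).Nonempty) :
    IsNonemptyClosedSubsystem F (spanInter F C T) := by
  have closed_image {j : J} (s : Σ l, (l ⟶ j) × (l ⟶ i)) :
      IsClosed (F.map s.2.1 '' (C s.1 ∩ F.map s.2.2 ⁻¹' T)) :=
    isClosedMap _ _ ((hC.isClosed _).inter (hT.preimage (F.map s.2.2).hom.continuous))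
  refine ⟨fun j ↦ isClosed_iInter closed_image, fun j ↦ ?_, hC.mapsTo_spanInter T⟩
  obtain ⟨l, a, b, -⟩ := IsCofilteredOrEmpty.cone_objs j i
  have : Nonempty (Σ l, (l ⟶ j) × (l ⟶ i)) := ⟨⟨l, a, b⟩⟩
  exact IsCompact.nonempty_iInter_of_directed_nonempty_isCompact_isClosed _
    (hC.directed_image_inter_preimage T j) (fun s ↦ (hCT s.2.2).image _)
    (fun s ↦ (closed_image s).isCompact) closed_image

theorem exists_eq_singleton_of_minimal [IsCofilteredOrEmpty J] [∀ j, CompactSpace (F.obj j)]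
    [∀ j, T0Space (F.obj j)] (isClosedMap : ∀ ⦃i j : J⦄ (f : i ⟶ j), IsClosedMap (F.map f))
    (hC : Minimal (IsNonemptyClosedSubsystem F) C) (i : J) :
    ∃ x : F.obj i, IsClosed {x} ∧ C i = {x} := by
  have subset_spanInter {i : J} {T : Set (F.obj i)} (hT : IsClosed T)
      (hCT : ∀ ⦃l : J⦄ (b : l ⟶ i), (C l ∩ F.map b ⁻¹' T).Nonempty) (j : J) :
      C j ⊆ spanInter F C T j :=
    hC.le_of_le (isNonemptyClosedSubsystem_spanInter hC.prop isClosedMap hT hCT)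
      (hC.prop.spanInter_subset T) j
  have surjOn {l j : J} (a : l ⟶ j) : Set.SurjOn (F.map a) (C l) (C j) := by
    intro x hx
    have hx' : x ∈ spanInter F C (Set.univ : Set (F.obj l)) j :=
      subset_spanInter isClosed_univ (fun m _ ↦ by simpa using hC.prop.nonempty m) j hx
    obtain ⟨y, hy, -, rfl⟩ := mem_spanInter.1 hx' l a (𝟙 l)
    exact ⟨y, hy, rfl⟩
  obtain ⟨x, hx, hx_closed⟩ := (hC.prop.isClosed i).exists_closed_singleton (hC.prop.nonempty i)
  refine ⟨x, hx_closed, Set.Subset.antisymm (fun x' hx' ↦ ?_) (Set.singleton_subset_iff.2 hx)⟩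
  have hx'_mem : x' ∈ spanInter F C {x} i :=
    subset_spanInter hx_closed (fun _ b ↦ surjOn b hx) i hx'
  obtain ⟨y, -, hyx, hyx'⟩ := mem_spanInter.1 hx'_mem i (𝟙 i) (𝟙 i)
  exact hyx' ▸ hyx

theorem exists_compatible_closed_points (F : J ⥤ TopCat.{w}) [IsCofilteredOrEmpty J]
    [∀ j, CompactSpace (F.obj j)] [∀ j, T0Space (F.obj j)] [∀ j, Nonempty (F.obj j)]
    (isClosedMap : ∀ ⦃i j : J⦄ (f : i ⟶ j), IsClosedMap (F.map f)) :
    ∃ x : ∀ j, F.obj j, (∀ j, IsClosed {x j}) ∧ ∀ ⦃i j : J⦄ (f : i ⟶ j), F.map f (x i) = x j := by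
  obtain ⟨C, hC⟩ := exists_minimal_isNonemptyClosedSubsystem (F := F)
  choose x hx_closed hCx using exists_eq_singleton_of_minimal isClosedMap hC
  refine ⟨x, hx_closed, fun i j f ↦ ?_⟩
  have hfx : F.map f (x i) ∈ C j := hC.prop.mapsTo f (by simp [hCx])
  simpa [hCx] using hfx

end Topology

section Schemes

theorem isProper_map_of_isProper_app {J : Type u} [Category.{v} J] {Z : J ⥤ Scheme.{w}}
    {S : Scheme.{w}} (π : Z ⟶ (Functor.const J).obj S) {i j : J} (f : i ⟶ j)
    [IsProper (π.app i)] [IsSeparated (π.app j)] : IsProper (Z.map f) := by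
  have hπ : Z.map f ≫ π.app j = π.app i := by simp
  have : IsProper (Z.map f ≫ π.app j) := hπ ▸ ‹IsProper (π.app i)›
  exact IsProper.of_comp _ (π.app j)

variable {k : Type w} [Field k] [IsAlgClosed k]

theorem pointOfClosedPoint_comp_eq {X Y : Scheme.{w}} (p : X ⟶ Spec (.of k))
    (q : Y ⟶ Spec (.of k)) [LocallyOfFiniteType p] [LocallyOfFiniteType q] {g : X ⟶ Y}
    (hg : g ≫ q = p) {x : X} {y : Y} (hx : IsClosed {x}) (hy : IsClosed {y}) (hxy : g x = y) :
    pointOfClosedPoint p x hx ≫ g = pointOfClosedPoint q y hy := by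
  have apply_eq (a : Spec (.of k)) :
      (pointOfClosedPoint p x hx ≫ g) a = pointOfClosedPoint q y hy a := by simp [hxy]
  exact ext_of_apply_closedPoint_eq q (by simp [hg]) (by simp) (apply_eq _)

theorem inverse_limit_proper_varieties_nonempty_general {J : Type u} [Category.{v} J]
    [IsCofilteredOrEmpty J] (Z : J ⥤ Scheme.{w})
    (π : Z ⟶ (Functor.const J).obj (Spec (CommRingCat.of k)))
    [∀ j, Nonempty (Z.obj j)] [∀ j, LocallyOfFiniteType (π.app j)] [∀ j, QuasiCompact (π.app j)]
    (isClosedMap : ∀ ⦃i j : J⦄ (f : i ⟶ j), IsClosedMap (Z.map f)) :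
    ∃ z : (Functor.const J).obj (Spec (CommRingCat.of k)) ⟶ Z, z ≫ π = 𝟙 _ := by
  have (j : J) : CompactSpace ((Z ⋙ Scheme.forgetToTop).obj j) :=
    QuasiCompact.compactSpace_of_compactSpace (Y := Spec (CommRingCat.of k)) (π.app j)
  have (j : J) : T0Space ((Z ⋙ Scheme.forgetToTop).obj j) :=
    inferInstanceAs (T0Space (Z.obj j))
  have (j : J) : Nonempty ((Z ⋙ Scheme.forgetToTop).obj j) :=
    inferInstanceAs (Nonempty (Z.obj j))
  obtain ⟨x, hx_closed, hx⟩ := exists_compatible_closed_points (Z ⋙ Scheme.forgetToTop) isClosedMap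
  refine ⟨⟨fun j ↦ pointOfClosedPoint (π.app j) (x j) (hx_closed j), fun i j f ↦ ?_⟩, ?_⟩
  · rw [pointOfClosedPoint_comp_eq (π.app i) (π.app j) (by simp) (hx_closed i) (hx_closed j) (hx f)]
    exact Category.id_comp _
  · ext1
    exact funext fun j ↦ pointOfClosedPoint_comp _ _ _

end Schemes

/-- Inverse limits of proper varieties: given a nonempty directed inverse system of
nonempty proper (reduced, finite type) varieties over an algebraically closed field `k`,
the inverse limit of their sets of `k`-points is nonempty. -/
theorem inverse_limit_proper_varieties_nonempty
    {k : Type} [Field k] [IsAlgClosed k]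
    {I : Type} [Preorder I] [Nonempty I] [IsDirected I (· ≤ ·)]
    (Z : Iᵒᵖ ⥤ Scheme)
    (π : Z ⟶ (Functor.const Iᵒᵖ).obj (Spec (CommRingCat.of k)))
    (hne : ∀ i : I, Nonempty (Z.obj (op i)))
    (hred : ∀ i : I, IsReduced (Z.obj (op i)))
    (hft : ∀ i : I, LocallyOfFiniteType (π.app (op i)))
    (hqc : ∀ i : I, QuasiCompact (π.app (op i)))
    (hproper : ∀ i : I, IsProper (π.app (op i))) :
    ∃ z : (i : I) → (Spec (CommRingCat.of k) ⟶ Z.obj (op i)),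
      (∀ i : I, z i ≫ π.app (op i) = 𝟙 (Spec (CommRingCat.of k))) ∧
      ∀ (i j : I) (h : i ≤ j), z j ≫ Z.map (homOfLE h).op = z i := by
  have (i : Iᵒᵖ) : Nonempty (Z.obj i) := hne i.unop
  have (i : Iᵒᵖ) : IsProper (π.app i) := hproper i.unop
  obtain ⟨z, hz⟩ := inverse_limit_proper_varieties_nonempty_general Z π fun _ _ f ↦
    have := isProper_map_of_isProper_app π f
    (Z.map f).isClosedMap
  exact ⟨fun i ↦ z.app (op i), fun i ↦ congr_app hz (op i),
    fun i j h ↦ (z.naturality (homOfLE h).op).symm.trans (Category.id_comp _)⟩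
end

section
/- Q-rank of the diagonal cubic ∑ xᵢyᵢzᵢ: for every positive integer n, the cubic form f on V = (Fin n → k) × (Fin n → k) × (Fin n → k) defined by f(x, y, z) = Σ_{i=1}^n xᵢ·yᵢ·zᵢ has q-rank exactly n. -/
open scoped BigOperators

/-- The q-rank of a function `f : V → k`: the least `r` such that
`f = ∑ ℓᵢ · qᵢ` with `ℓᵢ` linear functionals and `qᵢ` quadratic forms on `V`,
as an element of `ℕ∞` (`⊤` if no such expression exists). -/
noncomputable def qrank (k : Type*) [Field k] {V : Type*} [AddCommGroup V] [Module k V]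
    (f : V → k) : ℕ∞ :=
  sInf {r : ℕ∞ | ∃ m : ℕ, r = m ∧
    ∃ (ℓ : Fin m → (V →ₗ[k] k)) (q : Fin m → QuadraticForm k V),
      ∀ v, f v = ∑ i, ℓ i v * q i v}

/-!
Let the cubic vanish on a subspace `W` of codimension at most `m`; every expression with `m` terms
provides one, namely the common kernel of the `ℓᵢ`. Give the coordinates distinct integer weights
such that every monomial `xᵢ yᵢ zᵢ` has weight zero, and let `L` be the set of coordinates that are
the heaviest one occurring in some vector of `W`. Then `dim W ≤ |L|`, as in Gaussian elimination.
If `L` contained all of `xᵢ, yᵢ, zᵢ`, take three vectors of `W` led by them: in the polarization of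
the cubic at these vectors every term but the product of the three leading coefficients vanishes,
because the weights are distinct and add up to zero. The polarization vanishes on `W`, so `L` misses
a coordinate of every monomial, and `dim W ≤ 2n`, that is, `m ≥ n`.
-/

open Finset Module

section Permanent

variable {τ R : Type*} [Fintype τ] [DecidableEq τ] [CommRing R]

lemma sum_neg_one_pow_card_compl_of_subset (s : Finset τ) :
    ∑ t with s ⊆ t, (-1 : R) ^ #tᶜ = if s = univ then 1 else 0 := by
  have reindex : ∑ t with s ⊆ t, (-1 : R) ^ #tᶜ = ∑ t ∈ sᶜ.powerset, (-1 : R) ^ #t :=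
    sum_nbij' compl compl (by simp) (by simp [subset_compl_comm]) (by simp) (by simp) (by simp)
  have alternating := congrArg (Int.cast : ℤ → R) (sum_powerset_neg_one_pow_card (x := sᶜ))
  push_cast at alternating
  rw [reindex, alternating]
  simp only [compl_eq_empty_iff]

lemma permanent_eq_sum_bijective (M : Matrix τ τ R) :
    M.permanent = ∑ g : τ → τ with g.Bijective, ∏ j, M (g j) j := by
  rw [← sum_subtype_eq_sum_filter, subtype_univ, Matrix.permanent]
  exact (Fintype.sum_equiv Equiv.bijectiveEquiv _ _ fun _ => rfl).symm

/-- Ryser's formula. -/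
theorem permanent_eq_sum_neg_one_pow_mul_prod_sum (M : Matrix τ τ R) :
    M.permanent = ∑ s : Finset τ, (-1) ^ #sᶜ * ∏ j, ∑ i ∈ s, M i j := by
  symm
  calc ∑ s : Finset τ, (-1) ^ #sᶜ * ∏ j, ∑ i ∈ s, M i j
      = ∑ s : Finset τ, ∑ g : τ → τ with univ.image g ⊆ s, (-1) ^ #sᶜ * ∏ j, M (g j) j := by
        refine sum_congr rfl fun s _ => ?_
        rw [prod_univ_sum, mul_sum]
        exact sum_congr (by ext; simp [image_subset_iff]) fun _ _ => rfl
    _ = ∑ g : τ → τ, ∑ s with univ.image g ⊆ s, (-1) ^ #sᶜ * ∏ j, M (g j) j :=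
        sum_comm' (by simp)
    _ = ∑ g : τ → τ, if g.Bijective then ∏ j, M (g j) j else 0 := by
        refine sum_congr rfl fun g _ => ?_
        rw [← sum_mul, sum_neg_one_pow_card_compl_of_subset, ite_mul, one_mul, zero_mul]
        simp only [← coe_eq_univ, coe_image, coe_univ, Set.image_univ, Set.range_eq_univ,
          Finite.surjective_iff_bijective]
    _ = M.permanent := by rw [← sum_filter, permanent_eq_sum_bijective]

end Permanent

section LeadingIndices

variable {κ Γ R : Type*} [LinearOrder Γ] [Ring R]

/-- The indices of the leading coefficients of the vectors in `W`, where the leading coefficient of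
a vector is a nonzero coefficient at an index of largest weight. If `wt` is injective these are the
pivot positions of `W`. -/
def leadingIndices (wt : κ → Γ) (W : Submodule R (κ → R)) : Set κ :=
  {p | ∃ v ∈ W, v p ≠ 0 ∧ ∀ q, wt p < wt q → v q = 0}

lemma eq_zero_of_forall_mem_leadingIndices [Finite κ] {wt : κ → Γ} {W : Submodule R (κ → R)}
    {v : κ → R} (hv : v ∈ W) (hlead : ∀ p ∈ leadingIndices wt W, v p = 0) : v = 0 := by
  by_contra hne
  obtain ⟨p, hp, hmax⟩ :=
    (Set.toFinite v.support).exists_maximalFor wt _ (Function.support_nonempty_iff.mpr hne)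
  refine hp (hlead p ⟨v, hv, hp, fun q hpq => ?_⟩)
  by_contra hq
  exact hpq.not_ge (hmax hq hpq.le)

theorem finrank_le_ncard_leadingIndices [Finite κ] [StrongRankCondition R] (wt : κ → Γ)
    (W : Submodule R (κ → R)) : finrank R W ≤ (leadingIndices wt W).ncard := by
  have := Fintype.ofFinite (leadingIndices wt W)
  let restrict : W →ₗ[R] leadingIndices wt W → R := LinearMap.funLeft R R (↑) ∘ₗ W.subtype
  have restrict_injective : Function.Injective restrict :=
    (injective_iff_map_eq_zero restrict).mpr fun v hv => Subtype.ext <|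
      eq_zero_of_forall_mem_leadingIndices v.2 fun p hp => congrFun hv ⟨p, hp⟩
  calc finrank R W ≤ finrank R (leadingIndices wt W → R) :=
        LinearMap.finrank_le_finrank_of_injective restrict_injective
    _ = (leadingIndices wt W).ncard := by
        rw [finrank_fintype_fun_eq_card, ← Nat.card_coe_set_eq, Nat.card_eq_fintype_card]

end LeadingIndices

section DiagonalForm

variable {ι τ Γ : Type*} [Fintype τ] [AddCommMonoid Γ] [LinearOrder Γ] [IsOrderedCancelAddMonoid Γ]
  {wt : ι × τ → Γ} {c : Γ}

lemma eq_and_eq_one_of_forall_weight_le [Nonempty τ] (hwt : wt.Injective)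
    (hsum : ∀ i, ∑ t, wt (i, t) = c) {i j : ι} {σ : Equiv.Perm τ}
    (hle : ∀ t, wt (j, t) ≤ wt (i, σ t)) : j = i ∧ σ = 1 := by
  have sums_eq : ∑ t, wt (j, t) = ∑ t, wt (i, σ t) := by
    rw [Equiv.sum_comp σ fun t => wt (i, t), hsum, hsum]
  have index_eq (t : τ) : (j, t) = (i, σ t) :=
    hwt ((sum_eq_sum_iff_of_le fun t _ => hle t).mp sums_eq t (mem_univ t))
  exact ⟨congrArg Prod.fst (index_eq (Classical.arbitrary τ)),
    Equiv.ext fun t => (congrArg Prod.snd (index_eq t)).symm⟩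

variable {R : Type*} [Fintype ι] [CommRing R] {W : Submodule R (ι × τ → R)}

theorem sum_permanent_eq_zero_of_forall_sum_prod_eq_zero [DecidableEq τ]
    (hW : ∀ v ∈ W, ∑ i, ∏ t, v (i, t) = 0) {u : τ → ι × τ → R} (hu : ∀ t, u t ∈ W) :
    ∑ i, (Matrix.of fun s t => u s (i, t)).permanent = 0 := by
  simp only [permanent_eq_sum_neg_one_pow_mul_prod_sum, Matrix.of_apply]
  rw [sum_comm]
  refine sum_eq_zero fun s _ => ?_
  have hs := hW (∑ t ∈ s, u t) (sum_mem fun t _ => hu t)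
  simp only [Finset.sum_apply] at hs
  rw [← mul_sum, hs, mul_zero]

lemma sum_permanent_eq_prod_leading [DecidableEq τ] [Nonempty τ] (hwt : wt.Injective)
    (hsum : ∀ i, ∑ t, wt (i, t) = c) (i : ι) {u : τ → ι × τ → R}
    (hu : ∀ t p, wt (i, t) < wt p → u t p = 0) :
    ∑ j, (Matrix.of fun s t => u s (j, t)).permanent = ∏ t, u t (i, t) := by
  have term_eq_zero (j : ι) (σ : Equiv.Perm τ) (hne : ¬(j = i ∧ σ = 1)) :
      ∏ t, u (σ t) (j, t) = 0 := by
    obtain ⟨t, ht⟩ : ∃ t, wt (i, σ t) < wt (j, t) := by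
      by_contra! hle
      exact hne (eq_and_eq_one_of_forall_weight_le hwt hsum hle)
    exact prod_eq_zero (mem_univ t) (hu _ _ ht)
  simp only [Matrix.permanent, Matrix.of_apply]
  rw [Fintype.sum_eq_single i fun j hj => sum_eq_zero fun σ _ => term_eq_zero j σ (hj ·.1),
    Fintype.sum_eq_single 1 fun σ hσ => term_eq_zero i σ (hσ ·.2)]
  simp only [Equiv.Perm.one_apply]

variable [IsDomain R]

theorem exists_notMem_leadingIndices [Nonempty τ] (hwt : wt.Injective)
    (hsum : ∀ i, ∑ t, wt (i, t) = c) (hW : ∀ v ∈ W, ∑ i, ∏ t, v (i, t) = 0) (i : ι) :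
    ∃ t, (i, t) ∉ leadingIndices wt W := by
  classical
  by_contra! hlead
  choose u huW hu_ne hu_zero using hlead
  have leading_ne_zero : ∏ t, u t (i, t) ≠ 0 := prod_ne_zero_iff.mpr fun t _ => hu_ne t
  apply leading_ne_zero
  rw [← sum_permanent_eq_prod_leading hwt hsum i hu_zero]
  exact sum_permanent_eq_zero_of_forall_sum_prod_eq_zero hW huW

theorem finrank_add_card_le_of_forall_sum_prod_eq_zero [Nonempty τ] (hwt : wt.Injective)
    (hsum : ∀ i, ∑ t, wt (i, t) = c) (hW : ∀ v ∈ W, ∑ i, ∏ t, v (i, t) = 0) :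
    finrank R W + Fintype.card ι ≤ finrank R (ι × τ → R) := by
  choose t ht using exists_notMem_leadingIndices hwt hsum hW
  have card_le : Fintype.card ι ≤ (leadingIndices wt W)ᶜ.ncard := by
    rw [← Nat.card_eq_fintype_card, ← Nat.card_coe_set_eq]
    exact Nat.card_le_card_of_injective (fun i => ⟨(i, t i), ht i⟩)
      fun i j hij => congrArg (fun p => p.1.1) hij
  calc finrank R W + Fintype.card ι
      ≤ (leadingIndices wt W).ncard + (leadingIndices wt W)ᶜ.ncard :=
        add_le_add (finrank_le_ncard_leadingIndices wt W) card_le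
    _ = finrank R (ι × τ → R) := by
        rw [Set.ncard_add_ncard_compl, Nat.card_eq_fintype_card, finrank_fintype_fun_eq_card]

end DiagonalForm

lemma exists_injective_weight_sum_eq_zero (ι : Type*) [Countable ι] :
    ∃ wt : ι × Fin 3 → ℤ, wt.Injective ∧ ∀ i, ∑ t, wt (i, t) = 0 := by
  obtain ⟨e, he⟩ := exists_injective_nat ι
  -- Parity separates the first two families, and the third is negative.
  refine ⟨fun p => ![2 * (e p.1 : ℤ), 2 * e p.1 + 1, -(4 * e p.1 + 1)] p.2, ?_, fun i => ?_⟩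
  · rintro ⟨i, s⟩ ⟨j, t⟩ h
    rw [Prod.mk.injEq, ← he.eq_iff]
    fin_cases s <;> fin_cases t <;> simp [Fin.ext_iff] at h ⊢ <;> omega
  · simp only [Fin.sum_univ_three, Matrix.cons_val]
    ring

section QRank

variable {k V : Type*} [Field k] [AddCommGroup V] [Module k V] {f : V → k}

theorem qrank_le_card {ι : Type*} [Fintype ι] (ℓ : ι → V →ₗ[k] k) (q : ι → QuadraticForm k V)
    (hf : ∀ v, f v = ∑ i, ℓ i v * q i v) : qrank k f ≤ Fintype.card ι := by
  let e := (Fintype.equivFin ι).symm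
  exact sInf_le ⟨_, rfl, ℓ ∘ e, q ∘ e, fun v =>
    (hf v).trans (Equiv.sum_comp e fun i => ℓ i v * q i v).symm⟩

theorem qrank_comp_le {U : Type*} [AddCommGroup U] [Module k U] (f : V → k) (A : U →ₗ[k] V) :
    qrank k (f ∘ A) ≤ qrank k f := by
  refine le_sInf ?_
  rintro _ ⟨m, rfl, ℓ, q, hf⟩
  exact sInf_le ⟨m, rfl, fun i => ℓ i ∘ₗ A, fun i => (q i).comp A, fun u => hf (A u)⟩

theorem le_qrank_of_forall_finrank_add_le [FiniteDimensional k V] {r : ℕ}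
    (h : ∀ W : Submodule k V, (∀ v ∈ W, f v = 0) → finrank k W + r ≤ finrank k V) :
    r ≤ qrank k f := by
  refine le_sInf ?_
  rintro _ ⟨m, rfl, ℓ, q, hf⟩
  let L : V →ₗ[k] Fin m → k := LinearMap.pi ℓ
  have vanishes_on_ker : ∀ v ∈ LinearMap.ker L, f v = 0 := by
    intro v hv
    rw [hf]
    exact sum_eq_zero fun i _ => mul_eq_zero_of_left (congrFun hv i) _
  have ker_small := h _ vanishes_on_ker
  have rank_nullity := L.finrank_range_add_finrank_ker
  have range_small : finrank k (LinearMap.range L) ≤ m := by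
    simpa using (LinearMap.range L).finrank_le
  exact_mod_cast (by omega : r ≤ m)

end QRank

section DiagonalCubic

variable (k ι : Type*) [Field k] [Fintype ι]

theorem card_le_qrank_sum_prod :
    Fintype.card ι ≤ qrank k fun v : ι × Fin 3 → k => ∑ i, ∏ t, v (i, t) := by
  obtain ⟨wt, hwt, hsum⟩ := exists_injective_weight_sum_eq_zero ι
  exact le_qrank_of_forall_finrank_add_le fun W hW =>
    finrank_add_card_le_of_forall_sum_prod_eq_zero hwt hsum hW

theorem qrank_diagonal_cubic_general :
    qrank k (fun v : (ι → k) × (ι → k) × (ι → k) => ∑ i, v.1 i * v.2.1 i * v.2.2 i) =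
      Fintype.card ι := by
  apply le_antisymm
  · let x (i : ι) : (ι → k) × (ι → k) × (ι → k) →ₗ[k] k :=
      LinearMap.proj i ∘ₗ LinearMap.fst k _ _
    let y (i : ι) : (ι → k) × (ι → k) × (ι → k) →ₗ[k] k :=
      LinearMap.proj i ∘ₗ LinearMap.fst k _ _ ∘ₗ LinearMap.snd k _ _
    let z (i : ι) : (ι → k) × (ι → k) × (ι → k) →ₗ[k] k :=
      LinearMap.proj i ∘ₗ LinearMap.snd k _ _ ∘ₗ LinearMap.snd k _ _
    exact qrank_le_card x (fun i => QuadraticMap.linMulLin (y i) (z i)) fun v =>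
      sum_congr rfl fun i _ => mul_assoc _ _ _
  · let coords (t : Fin 3) : (ι × Fin 3 → k) →ₗ[k] ι → k := LinearMap.funLeft k k (·, t)
    let split := (coords 0).prod ((coords 1).prod (coords 2))
    refine (card_le_qrank_sum_prod k ι).trans (le_of_eq_of_le ?_ (qrank_comp_le _ split))
    congr 1
    funext v
    exact sum_congr rfl fun i _ => Fin.prod_univ_three _

end DiagonalCubic

/-- The diagonal cubic `∑ xᵢ yᵢ zᵢ` in `3n` variables has q-rank exactly `n`. -/
theorem qrank_diagonal_cubic {k : Type*} [Field k] [IsAlgClosed k]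
    (h2 : (2 : k) ≠ 0) (h3 : (3 : k) ≠ 0) (n : ℕ) (hn : 0 < n) :
    qrank k (fun v : (Fin n → k) × (Fin n → k) × (Fin n → k) =>
      ∑ i, v.1 i * v.2.1 i * v.2.2 i) = n := by
  simpa using qrank_diagonal_cubic_general k (Fin n)
end

section
/- Nonvanishing on codimension n−1 subspaces: let V be a k-vector space of dimension 2n+1 (n a positive integer), and let x₁,…,x_n, y₁,…,y_n, z₁,…,z_n be linear functionals on V whose collection spans the full dual space of V. Then the function v ↦ Σ_{i=1}^n xᵢ(v)·yᵢ(v)·zᵢ(v) is not identically zero: there exists v ∈ V with Σ_{i=1}^n xᵢ(v)·yᵢ(v)·zᵢ(v) ≠ 0. -/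
open scoped BigOperators

/-!
Consider a sum of blocks `∏ j, φ i w j`, `i ∈ s`, each a product of `d ≥ 2` linear forms. If the sum
vanishes on a subspace `W`, then the common kernel of the `φ i` has codimension at most
`(d - 1) * #s` in `W`. For `W = V` and forms spanning the dual of `V` this common kernel is trivial,
so `dim V ≤ (d - 1) * #s`.

The codimension bound goes by induction on `s`. When a block `a` is added, the old sum still
vanishes on each hyperplane section `{w ∈ W | φ a w j = 0}`. If the new bound failed, then the
induction hypothesis for this section would force `φ a` to map the part of `W` in the old common
kernel onto a subspace containing the coordinate hyperplane `{u | u j = 0}`. Two such hyperplanes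
together span `(1, …, 1)`, at which the block `a` does not vanish.
-/

open Module LinearMap

section Dimension

variable {k V E : Type*} [Field k] [AddCommGroup V] [Module k V] [FiniteDimensional k V]
  [AddCommGroup E] [Module k E]

theorem finrank_map_add_finrank_inf_ker (f : V →ₗ[k] E) (W : Submodule k V) :
    finrank k (W.map f) + finrank k (W ⊓ ker f : Submodule k V) = finrank k W := by
  rw [← finrank_range_add_finrank_ker (f.domRestrict W), range_domRestrict, ker_domRestrict,
    ← Submodule.map_comap_subtype, Submodule.finrank_map_subtype_eq]

theorem finrank_le_finrank_inf_ker_add_one (f : Dual k V) (W : Submodule k V) :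
    finrank k W ≤ finrank k (W ⊓ ker f : Submodule k V) + 1 := by
  have hrange : finrank k (W.map f) ≤ 1 := (W.map f).finrank_le.trans_eq (finrank_self k)
  have hrank := finrank_map_add_finrank_inf_ker f W
  lia

theorem le_map_of_finrank_add_finrank_inf_ker_le (f : V →ₗ[k] E) (W : Submodule k V)
    (H : Submodule k E) [FiniteDimensional k H]
    (h : finrank k H + finrank k (W ⊓ ker f : Submodule k V) ≤
      finrank k (W ⊓ H.comap f : Submodule k V)) :
    H ≤ W.map f := by
  have hker : W ⊓ H.comap f ⊓ ker f = W ⊓ ker f := by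
    rw [inf_assoc, inf_eq_right.mpr (ker_le_comap f)]
  have hrank := finrank_map_add_finrank_inf_ker f (W ⊓ H.comap f)
  rw [hker, ← Submodule.map_inf_eq_map_inf_comap] at hrank
  exact inf_eq_right.mp (Submodule.eq_of_le_of_finrank_le inf_le_right (by lia))

end Dimension

section CoordinateHyperplanes

variable {k κ : Type*} [Field k]

theorem finrank_ker_proj_add_one [Fintype κ] (j : κ) :
    finrank k (ker (proj j : (κ → k) →ₗ[k] k)) + 1 = Fintype.card κ := by
  have hproj : (proj j : Dual k (κ → k)) ≠ 0 := fun h ↦ one_ne_zero (DFunLike.congr_fun h 1)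
  rw [Dual.finrank_ker_add_one_of_ne_zero hproj, finrank_fintype_fun_eq_card]

theorem one_mem_of_forall_ker_proj_le [Nontrivial κ] {U : Submodule k (κ → k)}
    (hU : ∀ j, ker (proj j : (κ → k) →ₗ[k] k) ≤ U) : 1 ∈ U := by
  classical
  obtain ⟨i, j, hij⟩ := exists_pair_ne κ
  have hi : Pi.single j 1 ∈ U := hU i (by simp [hij])
  have hj : 1 - Pi.single j 1 ∈ U := hU j (by simp)
  simpa using U.add_mem hj hi

end CoordinateHyperplanes

section SumOfProducts

variable {k V ι κ : Type*} [Field k] [AddCommGroup V] [Module k V]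

theorem finrank_le_of_sum_prod_eq_zero [FiniteDimensional k V] [Fintype κ] [Nontrivial κ]
    (φ : ι → V →ₗ[k] (κ → k)) (s : Finset ι) (W : Submodule k V)
    (hW : ∀ w ∈ W, ∑ i ∈ s, ∏ j, φ i w j = 0) :
    finrank k W ≤ (Fintype.card κ - 1) * s.card +
      finrank k (W ⊓ ⨅ i ∈ s, ker (φ i) : Submodule k V) := by
  classical
  induction s using Finset.induction_on generalizing W with
  | empty => exact (Submodule.finrank_mono (by simp)).trans (Nat.le_add_left _ _)
  | insert a s ha ih =>
    simp only [Finset.sum_insert ha] at hW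
    rw [Finset.card_insert_of_notMem ha, Finset.iInf_insert, inf_comm (ker (φ a)), ← inf_assoc,
      mul_add_one]
    set K := ⨅ i ∈ s, ker (φ i)
    by_contra! hlt
    have hyperplane_le (j : κ) : ker (proj j) ≤ (W ⊓ K).map (φ a) := by
      refine le_map_of_finrank_add_finrank_inf_ker_le (φ a) _ _ ?_
      have hsection := finrank_le_finrank_inf_ker_add_one (proj j ∘ₗ φ a) W
      have hcommon := ih (W ⊓ ker (proj j ∘ₗ φ a)) fun w ⟨hw, hwj⟩ ↦ by
        have hblock : ∏ j, φ a w j = 0 := Finset.prod_eq_zero (Finset.mem_univ j) hwj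
        simpa only [hblock, zero_add] using hW w hw
      have hproj := finrank_ker_proj_add_one (k := k) j
      rw [inf_right_comm, ker_comp] at hcommon
      rw [ker_comp] at hsection
      lia
    obtain ⟨w, ⟨hwW, hwK⟩, hw⟩ := one_mem_of_forall_ker_proj_le hyperplane_le
    have hzero : ∀ i ∈ s, φ i w = 0 := by simpa [K] using hwK
    have hrest : ∑ i ∈ s, ∏ j, φ i w j = 0 := Finset.sum_eq_zero fun i hi ↦ by simp [hzero i hi]
    simpa [hw, hrest] using hW w hwW

theorem iInf_ker_eq_bot_of_span_range_eq_top {x : ι → Dual k V}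
    (hx : Submodule.span k (Set.range x) = ⊤) : ⨅ i, ker (x i) = ⊥ := by
  rw [← Submodule.dualCoannihilator_top, ← hx]
  exact SetLike.coe_injective (by ext; simp)

theorem diagonal_cubic_nonvanishing_general [Fintype ι] [Fintype κ] [Nontrivial κ]
    (x : ι → κ → Dual k V) (hdim : (Fintype.card κ - 1) * Fintype.card ι < finrank k V)
    (hspan : Submodule.span k (Set.range (Function.uncurry x)) = ⊤) :
    ∃ v : V, ∑ i, ∏ j, x i j v ≠ 0 := by
  have : FiniteDimensional k V := finite_of_finrank_pos (Nat.zero_lt_of_lt hdim)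
  by_contra! hvanish
  have hbound := finrank_le_of_sum_prod_eq_zero (fun i ↦ LinearMap.pi (x i)) Finset.univ ⊤
    fun v _ ↦ hvanish v
  have hker : ⨅ i ∈ Finset.univ, ker (LinearMap.pi (x i)) = ⊥ := by
    simpa only [Finset.mem_univ, iInf_pos, ker_pi, iInf_prod, Function.uncurry_apply_pair]
      using iInf_ker_eq_bot_of_span_range_eq_top hspan
  rw [hker, inf_bot_eq, finrank_bot, finrank_top, Finset.card_univ, add_zero] at hbound
  exact hdim.not_ge hbound

end SumOfProducts

theorem range_uncurry_vecCons_three {ι α : Type*} (x y z : ι → α) :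
    Set.range (Function.uncurry fun i ↦ ![x i, y i, z i]) =
      Set.range x ∪ Set.range y ∪ Set.range z := by
  ext; simp [Fin.exists_fin_succ, exists_or, or_assoc]

/-- Nonvanishing on codimension `n-1` subspaces: if `dim V = 2n + 1` and the linear
functionals `xᵢ, yᵢ, zᵢ` (for `1 ≤ i ≤ n`) span the dual space of `V`, then
`v ↦ ∑ xᵢ(v) yᵢ(v) zᵢ(v)` is not identically zero. -/
theorem diagonal_cubic_nonvanishing {k : Type*} [Field k] [IsAlgClosed k]
    (h2 : (2 : k) ≠ 0) (h3 : (3 : k) ≠ 0)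
    {V : Type*} [AddCommGroup V] [Module k V] [FiniteDimensional k V]
    (n : ℕ) (hn : 0 < n) (hdim : Module.finrank k V = 2 * n + 1)
    (x y z : Fin n → (V →ₗ[k] k))
    (hspan : Submodule.span k (Set.range x ∪ Set.range y ∪ Set.range z) = ⊤) :
    ∃ v : V, ∑ i, x i v * y i v * z i v ≠ 0 := by
  simpa [Fin.prod_univ_three] using diagonal_cubic_nonvanishing_general
    (fun i ↦ ![x i, y i, z i]) (by simp [hdim]) (by rwa [range_uncurry_vecCons_three])
end

section
/- A cubic of infinite q-rank: let V = ℕ → (k × k × k) with finite support (the countable direct sum ⊕_{i ∈ ℕ} k³), and let f be the cubic form on V defined by f(v) = Σ_{i ∈ ℕ} xᵢ(v)·yᵢ(v)·zᵢ(v), where xᵢ, yᵢ, zᵢ are the three coordinate functionals at index i (the sum is finite since v has finite support). Then qrank(f) = ∞; i.e. there is no finite r, linear functionals ℓ₁,…,ℓ_r and quadratic forms q₁,…,q_r on V with f(v) = Σ_{i=1}^r ℓᵢ(v)·qᵢ(v) for all v. -/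
open scoped BigOperators

/-!
A function of finite q-rank vanishes on a subspace of finite codimension. Suppose
`∑ xᵢ yᵢ zᵢ` does; restricting to each coordinate gives subspaces `A`, `B`, `C` of finite
codimension in `⨁ k` with `∑ aᵢ bᵢ cᵢ = 0` for all `a ∈ A`, `b ∈ B`, `c ∈ C`. The vectors of `⨁ k`
orthogonal to a subspace of finite codimension form a finite-dimensional space, so they are all
supported in one finite set of indices. Pick an index `i` outside the three finite sets obtained
from `A`, `B` and `C`. The `i`-th basis vector is orthogonal to neither `B` nor `C`, so there are
`b ∈ B` and `c ∈ C` with `bᵢ cᵢ ≠ 0`. Then `i` lies in the support of the pointwise product `b * c`,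
which is therefore not orthogonal to `A`.
-/

open Filter Finsupp Submodule

theorem cofg_comap {R M N : Type*} [Ring R] [IsNoetherianRing R] [AddCommGroup M] [Module R M]
    [AddCommGroup N] [Module R N] (f : M →ₗ[R] N) {W : Submodule R N} (hW : W.CoFG) :
    (W.comap f).CoFG := by
  rw [← W.ker_mkQ, ← LinearMap.ker_comp]
  exact CoFG.ker _

theorem fg_comap_of_injective {R M N : Type*} [Ring R] [IsNoetherianRing R] [AddCommGroup M]
    [Module R M] [AddCommGroup N] [Module R N] {f : M →ₗ[R] N} (hf : Function.Injective f)
    {W : Submodule R N} (hW : W.FG) : (W.comap f).FG :=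
  fg_of_fg_map_injective f hf (hW.of_le (map_comap_le f W))

theorem exists_finite_le_supported_of_fg {R M ι : Type*} [Semiring R] [AddCommMonoid M]
    [Module R M] {F : Submodule R (ι →₀ M)} (hF : F.FG) :
    ∃ S : Set ι, S.Finite ∧ F ≤ supported M R S := by
  obtain ⟨s, rfl⟩ := hF
  exact ⟨_, s.finite_toSet.biUnion fun v _ => v.support.finite_toSet,
    span_le_supported_biUnion_support R _⟩

section Pairing

variable (R ι : Type*) [CommSemiring R]

/-- The standard pairing `(w, a) ↦ ∑ᵢ aᵢ wᵢ` on `⨁_ι R`, as a linear map to the dual. -/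
noncomputable def finsuppPairing : (ι →₀ R) →ₗ[R] Module.Dual R (ι →₀ R) :=
  bilinearCombination R R ∘ₗ lcoeFun

variable {R ι}

theorem finsuppPairing_apply (w a : ι →₀ R) :
    finsuppPairing R ι w a = a.sum fun i t => t * w i := rfl

theorem finsuppPairing_single_left (i : ι) (a : ι →₀ R) :
    finsuppPairing R ι (single i 1) a = a i := by
  classical
  simp +contextual [finsuppPairing_apply, single_apply, Finsupp.sum]

theorem finsuppPairing_single_right (w : ι →₀ R) (i : ι) :
    finsuppPairing R ι w (single i 1) = w i := by
  simp [finsuppPairing_apply]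

theorem finsuppPairing_injective : Function.Injective (finsuppPairing R ι) := by
  intro v w h
  ext i
  rw [← finsuppPairing_single_right, h, finsuppPairing_single_right]

end Pairing

section FiniteCodimension

variable {k ι : Type*} [Field k]

theorem fg_comap_finsuppPairing_dualAnnihilator {A : Submodule k (ι →₀ k)} (hA : A.CoFG) :
    (A.dualAnnihilator.comap (finsuppPairing k ι)).FG :=
  fg_comap_of_injective finsuppPairing_injective
    (Module.Finite.iff_fg.mp (finite_dualAnnihilator_iff.mpr hA))

theorem eventually_cofinite_exists_finsuppPairing_ne_zero {A : Submodule k (ι →₀ k)}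
    (hA : A.CoFG) :
    ∀ᶠ i in cofinite, ∀ w : ι →₀ k, w i ≠ 0 → ∃ a ∈ A, finsuppPairing k ι w a ≠ 0 := by
  obtain ⟨S, hS, hle⟩ :=
    exists_finite_le_supported_of_fg (fg_comap_finsuppPairing_dualAnnihilator hA)
  filter_upwards [hS.compl_mem_cofinite] with i hiS w hwi
  by_contra! horth
  have hw : w ∈ supported k k S := hle ((mem_dualAnnihilator _).mpr horth)
  exact hiS (hw (mem_support_iff.mpr hwi))

theorem eventually_cofinite_exists_mem_apply_ne_zero {A : Submodule k (ι →₀ k)} (hA : A.CoFG) :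
    ∀ᶠ i in cofinite, ∃ a ∈ A, a i ≠ 0 := by
  filter_upwards [eventually_cofinite_exists_finsuppPairing_ne_zero hA] with i hi
  simpa only [finsuppPairing_single_left] using hi (single i 1) (by simp)

theorem exists_finsuppPairing_mul_ne_zero [Infinite ι] {A B C : Submodule k (ι →₀ k)}
    (hA : A.CoFG) (hB : B.CoFG) (hC : C.CoFG) :
    ∃ a ∈ A, ∃ b ∈ B, ∃ c ∈ C, finsuppPairing k ι (b * c) a ≠ 0 := by
  obtain ⟨i, hAi, ⟨b, hb, hbi⟩, c, hc, hci⟩ :=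
    ((eventually_cofinite_exists_finsuppPairing_ne_zero hA).and
      ((eventually_cofinite_exists_mem_apply_ne_zero hB).and
        (eventually_cofinite_exists_mem_apply_ne_zero hC))).exists
  obtain ⟨a, ha, habc⟩ := hAi (b * c) (mul_ne_zero hbi hci)
  exact ⟨a, ha, b, hb, c, hc, habc⟩

end FiniteCodimension

section DiagonalCubic

variable {R ι : Type*} [CommSemiring R]

variable (R ι) in
/-- The inclusion of `⨁_ι R` in `⨁_ι R³` as the first coordinates. -/
noncomputable def inclX : (ι →₀ R) →ₗ[R] (ι →₀ R × R × R) :=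
  mapRange.linearMap (LinearMap.inl R R (R × R))

variable (R ι) in
/-- The inclusion of `⨁_ι R` in `⨁_ι R³` as the second coordinates. -/
noncomputable def inclY : (ι →₀ R) →ₗ[R] (ι →₀ R × R × R) :=
  mapRange.linearMap (LinearMap.inr R R (R × R) ∘ₗ LinearMap.inl R R R)

variable (R ι) in
/-- The inclusion of `⨁_ι R` in `⨁_ι R³` as the third coordinates. -/
noncomputable def inclZ : (ι →₀ R) →ₗ[R] (ι →₀ R × R × R) :=
  mapRange.linearMap (LinearMap.inr R R (R × R) ∘ₗ LinearMap.inr R R R)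

theorem incl_add_incl_add_incl_apply (a b c : ι →₀ R) (i : ι) :
    (inclX R ι a + inclY R ι b + inclZ R ι c) i = (a i, b i, c i) := by
  simp [inclX, inclY, inclZ]

theorem sum_mul_mul_incl_eq_finsuppPairing (a b c : ι →₀ R) :
    ((inclX R ι a + inclY R ι b + inclZ R ι c).sum fun _ t => t.1 * t.2.1 * t.2.2) =
      finsuppPairing R ι (b * c) a := by
  have support_subset : a.support ⊆ (inclX R ι a + inclY R ι b + inclZ R ι c).support := by
    intro i hi
    rw [mem_support_iff, incl_add_incl_add_incl_apply]
    exact fun h => mem_support_iff.mp hi (congrArg Prod.fst h)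
  rw [finsuppPairing_apply, sum_of_support_subset a support_subset _ (by simp), Finsupp.sum]
  simp only [incl_add_incl_add_incl_apply, mul_apply, mul_assoc]

end DiagonalCubic

theorem exists_cofg_forall_mem_eq_zero_of_qrank_ne_top {k V : Type*} [Field k] [AddCommGroup V]
    [Module k V] {f : V → k} (hf : qrank k f ≠ ⊤) :
    ∃ W : Submodule k V, W.CoFG ∧ ∀ v ∈ W, f v = 0 := by
  rw [qrank, Ne, sInf_eq_top] at hf
  push Not at hf
  obtain ⟨_, ⟨m, rfl, ℓ, q, hfq⟩, -⟩ := hf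
  refine ⟨LinearMap.ker (LinearMap.pi ℓ), CoFG.ker _, fun v hv => ?_⟩
  have hℓ (i : Fin m) : ℓ i v = 0 := congrFun (LinearMap.mem_ker.mp hv) i
  simp [hfq, hℓ]

theorem qrank_infinite_diagonal_cubic_general {k ι : Type*} [Field k] [Infinite ι] :
    qrank k (fun v : ι →₀ (k × k × k) => v.sum fun _ c => c.1 * c.2.1 * c.2.2) = ⊤ := by
  by_contra hfinite
  obtain ⟨W, hW, hvanish⟩ := exists_cofg_forall_mem_eq_zero_of_qrank_ne_top hfinite
  obtain ⟨a, ha, b, hb, c, hc, habc⟩ := exists_finsuppPairing_mul_ne_zero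
    (cofg_comap (inclX k ι) hW) (cofg_comap (inclY k ι) hW) (cofg_comap (inclZ k ι) hW)
  rw [← sum_mul_mul_incl_eq_finsuppPairing] at habc
  exact habc (hvanish _ (W.add_mem (W.add_mem ha hb) hc))

/-- The cubic `∑_{i ∈ ℕ} xᵢ yᵢ zᵢ` on the countable direct sum `⨁_{i ∈ ℕ} k³`
has infinite q-rank. -/
theorem qrank_infinite_diagonal_cubic {k : Type*} [Field k] [IsAlgClosed k]
    (h2 : (2 : k) ≠ 0) (h3 : (3 : k) ≠ 0) :
    qrank k (fun v : ℕ →₀ (k × k × k) =>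
      v.sum fun _ c => c.1 * c.2.1 * c.2.2) = ⊤ :=
  qrank_infinite_diagonal_cubic_general
end

section
/- Uniform bound on linear subspaces of cubic hypersurfaces: for every positive integer c there exists an integer B (depending only on c and k) with the following property: for every n and every nonzero homogeneous degree-3 polynomial f in n variables over k, if the set of linear subspaces W ⊆ kⁿ of codimension c on which f vanishes identically is finite, then this set has cardinality at most B. -/
open scoped BigOperators

/-!
Write the cubic as `F v v v / 6` for a symmetric trilinear form `F`, so that the subspaces in
question are the `F`-isotropic subspaces of codimension `c`. If there are finitely many of them,
each is a maximal isotropic subspace, since the subspaces of fixed positive dimension in a strictly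
larger isotropic one form an infinite family. The span `U` of all of them is already spanned by
`c + 1` of them; their intersection `I` has codimension at most `c * (c + 1)`, and `F(I, I, U) = 0`.
Hence some `K ≤ I` of codimension bounded in terms of `c` satisfies `F(K, U, U) = 0`, and
maximality forces `K ≤ W ≤ U` for every `W` in question. This reduces the problem to `U / K`, whose
dimension is bounded in terms of `c`. In a fixed dimension the charts of the Grassmannian present
the isotropic subspaces of `F` as the fibres of an algebraic family parametrized by the
coefficients of `F`, and the finite fibres of such a family are uniformly bounded: by Chevalley's
theorem each coordinate takes its values in the fibres of a constructible set over the parameter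
space, and a finite fibre of a constructible subset of a family of lines has at most as many points
as the degrees of its equations allow.
-/

section ChevalleyPoints

open MvPolynomial

variable {k σ τ ι : Type*} [Field k]

theorem mem_asIdeal_pointToPoint_iff (y : σ → k) (p : MvPolynomial σ k) :
    p ∈ (pointToPoint (k := k) y).asIdeal ↔ eval y p = 0 :=
  mem_vanishingIdeal_singleton_iff y p

theorem pointToPoint_mem_zeroLocus_iff (y : σ → k) (s : Set (MvPolynomial σ k)) :
    pointToPoint (k := k) y ∈ PrimeSpectrum.zeroLocus s ↔ ∀ p ∈ s, eval y p = 0 := by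
  simp only [PrimeSpectrum.mem_zeroLocus, Set.subset_def, SetLike.mem_coe,
    mem_asIdeal_pointToPoint_iff]

/-- The `k`-rational points of the constructible subset of affine space described by `S`: those at
which, for some piece `C` of `S`, all the equations `C.g i` vanish and `C.f` does not. -/
def constructiblePoints (S : PrimeSpectrum.ConstructibleSetData (MvPolynomial σ k)) :
    Set (σ → k) :=
  {y | ∃ C ∈ S, (∀ i, eval y (C.g i) = 0) ∧ eval y C.f ≠ 0}

theorem mem_constructiblePoints_iff (y : σ → k)
    (S : PrimeSpectrum.ConstructibleSetData (MvPolynomial σ k)) :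
    y ∈ constructiblePoints S ↔ pointToPoint (k := k) y ∈ S.toSet := by
  simp only [constructiblePoints, Set.mem_ofPred_eq,
    PrimeSpectrum.ConstructibleSetData.toSet, Set.mem_iUnion, exists_prop,
    PrimeSpectrum.BasicConstructibleSetData.toSet, Set.mem_sdiff, pointToPoint_mem_zeroLocus_iff,
    Set.forall_mem_range, Set.mem_singleton_iff, forall_eq]

theorem comap_aeval_pointToPoint (q : σ → MvPolynomial τ k) (x : τ → k) :
    PrimeSpectrum.comap (aeval (R := k) q).toRingHom (pointToPoint x) =
      pointToPoint (fun i => eval x (q i)) := by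
  ext p
  have heval : eval x (aeval q p) = eval (fun i => eval x (q i)) p :=
    comp_aeval_apply q (aeval x) p
  rw [PrimeSpectrum.comap_asIdeal, Ideal.mem_comap, mem_asIdeal_pointToPoint_iff,
    mem_asIdeal_pointToPoint_iff, ← heval]
  rfl

theorem finitePresentation_algHom_mvPolynomial [Finite σ] [Finite τ]
    (φ : MvPolynomial σ k →ₐ[k] MvPolynomial τ k) : φ.FinitePresentation := by
  have hk : (φ.comp (Algebra.ofId k _)).FiniteType := by
    rw [Subsingleton.elim (φ.comp (Algebra.ofId k _)) (Algebra.ofId k _)]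
    exact RingHom.finiteType_algebraMap.2 inferInstance
  exact AlgHom.FinitePresentation.of_finiteType.1 hk.of_comp_finiteType

theorem isConstructible_zeroLocus_of_finite {R : Type*} [CommRing R] {s : Set R}
    (hs : s.Finite) : Topology.IsConstructible (PrimeSpectrum.zeroLocus s) := by
  rw [← Topology.isConstructible_compl]
  exact (PrimeSpectrum.isRetrocompact_zeroLocus_compl hs).isConstructible
    (PrimeSpectrum.isClosed_zeroLocus _).isOpen_compl

theorem pointToPoint_mem_comap_image_zeroLocus_iff [IsAlgClosed k] [Finite τ]
    (q : σ → MvPolynomial τ k) (s : Set (MvPolynomial τ k)) (y : σ → k) :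
    pointToPoint y ∈ PrimeSpectrum.comap (aeval (R := k) q).toRingHom ''
        PrimeSpectrum.zeroLocus s ↔
      y ∈ (fun x i => eval x (q i)) '' {x : τ → k | ∀ p ∈ s, eval x p = 0} := by
  constructor
  · rintro ⟨𝔭, hs𝔭, h𝔭y⟩
    obtain ⟨𝔪, h𝔪, h𝔭𝔪⟩ := Ideal.exists_le_maximal 𝔭.asIdeal 𝔭.2.ne_top
    obtain ⟨x, rfl⟩ := isMaximal_iff_eq_vanishingIdeal_singleton.1 h𝔪
    have eval_eq_zero_of_mem {p} (hp : p ∈ 𝔭.asIdeal) : eval x p = 0 :=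
      (mem_asIdeal_pointToPoint_iff x p).1 (h𝔭𝔪 hp)
    refine ⟨x, fun p hp => eval_eq_zero_of_mem (hs𝔭 hp), funext fun i => ?_⟩
    have hX : X i - C (y i) ∈ (pointToPoint (k := k) y).asIdeal := by
      simp [mem_asIdeal_pointToPoint_iff]
    rw [← h𝔭y] at hX
    simpa [sub_eq_zero, algebraMap_eq] using eval_eq_zero_of_mem hX
  · rintro ⟨x, hx, rfl⟩
    exact ⟨pointToPoint x, (pointToPoint_mem_zeroLocus_iff x s).2 hx,
      comap_aeval_pointToPoint q x⟩

theorem exists_constructiblePoints_eq_image [IsAlgClosed k] [Finite σ] [Finite τ] [Finite ι]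
    (P : ι → MvPolynomial τ k) (q : σ → MvPolynomial τ k) :
    ∃ S : PrimeSpectrum.ConstructibleSetData (MvPolynomial σ k),
      constructiblePoints S =
        (fun x i => eval x (q i)) '' {x : τ → k | ∀ i, eval x (P i) = 0} := by
  obtain ⟨S, hS⟩ := PrimeSpectrum.exists_constructibleSetData_iff.2 <|
    PrimeSpectrum.isConstructible_comap_image
      (finitePresentation_algHom_mvPolynomial (aeval (R := k) q))
      (isConstructible_zeroLocus_of_finite (Set.finite_range P))
  refine ⟨S, Set.ext fun y => ?_⟩
  rw [mem_constructiblePoints_iff, hS]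
  simpa only [Set.forall_mem_range] using
    pointToPoint_mem_comap_image_zeroLocus_iff q (Set.range P) y

end ChevalleyPoints

section FiniteFibers

open MvPolynomial

variable {k σ τ ι : Type*} [Field k]

theorem exists_ne_zero_of_finite_setOf_eval_eq_zero_ne_zero [Infinite k] {g : ι → Polynomial k}
    {f : Polynomial k} (hf : f ≠ 0)
    (hfin : {t : k | (∀ i, (g i).eval t = 0) ∧ f.eval t ≠ 0}.Finite) : ∃ i, g i ≠ 0 := by
  by_contra! hg
  have hfin_union := hfin.union (Polynomial.finite_setOfPred_isRoot hf)
  refine Set.infinite_univ (hfin_union.subset fun t _ => ?_)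
  by_cases ht : f.eval t = 0
  · exact Or.inr ht
  · exact Or.inl ⟨by simp [hg], ht⟩

theorem exists_ncard_constructiblePoints_fiber_le [Infinite k]
    (S : PrimeSpectrum.ConstructibleSetData (MvPolynomial (Option σ) k)) :
    ∃ B : ℕ, ∀ s : σ → k,
      {t : k | (fun o => Option.elim o t s) ∈ constructiblePoints S}.Finite →
      {t : k | (fun o => Option.elim o t s) ∈ constructiblePoints S}.ncard ≤ B := by
  classical
  refine ⟨∑ C ∈ S, ∑ i, (optionEquivLeft k σ (C.g i)).natDegree, fun s hfin => ?_⟩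
  let toUnivariate (p : MvPolynomial (Option σ) k) : Polynomial k :=
    (optionEquivLeft k σ p).map (eval s)
  simp only [constructiblePoints, Set.mem_ofPred_eq, optionEquivLeft_elim_eval] at hfin ⊢
  let roots : Finset k := S.biUnion fun C =>
    Finset.univ.biUnion fun i => (toUnivariate (C.g i)).roots.toFinset
  have subset_roots : {t | ∃ C ∈ S, (∀ i, (toUnivariate (C.g i)).eval t = 0) ∧
      (toUnivariate C.f).eval t ≠ 0} ⊆ roots := by
    rintro t ⟨C, hC, hg, hf⟩
    obtain ⟨i, hi⟩ := exists_ne_zero_of_finite_setOf_eval_eq_zero_ne_zero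
      (g := fun i => toUnivariate (C.g i)) (f := toUnivariate C.f)
      (by rintro h; simp [h] at hf) (hfin.subset fun t ht => ⟨C, hC, ht⟩)
    simp only [roots, Finset.coe_biUnion, Set.mem_iUnion]
    exact ⟨C, hC, i, Finset.mem_coe.2 (Finset.mem_univ i), by simpa [hi] using hg i⟩
  calc _ ≤ roots.card := by
        rw [← Set.ncard_coe_finset]
        exact Set.ncard_le_ncard subset_roots roots.finite_toSet
    _ ≤ ∑ C ∈ S, ∑ i, (toUnivariate (C.g i)).roots.toFinset.card :=
        Finset.card_biUnion_le.trans (Finset.sum_le_sum fun C _ => Finset.card_biUnion_le)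
    _ ≤ _ := by
        gcongr with C _ i
        exact (Multiset.toFinset_card_le _).trans
          ((Polynomial.card_roots' _).trans Polynomial.natDegree_map_le)

/-- The fibre over the parameter `s` of the family of affine algebraic sets cut out by the
polynomials `P i`, whose variables are split into parameters `σ` and unknowns `τ`. -/
def solutionFiber {R : Type*} [CommRing R] (P : ι → MvPolynomial (σ ⊕ τ) R) (s : σ → R) :
    Set (τ → R) :=
  {x | ∀ i, eval (Sum.elim s x) (P i) = 0}

theorem mem_image_solutionFiber_iff {R : Type*} [CommRing R] (P : ι → MvPolynomial (σ ⊕ τ) R)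
    (j : τ) (s : σ → R) (t : R) :
    t ∈ Function.eval j '' solutionFiber P s ↔
      (fun o => Option.elim o t s) ∈
        (fun x (o : Option σ) => eval x (o.elim (X (Sum.inr j)) (fun i => X (Sum.inl i)))) ''
          {x : σ ⊕ τ → R | ∀ i, eval x (P i) = 0} := by
  constructor
  · rintro ⟨x, hx, rfl⟩
    exact ⟨Sum.elim s x, hx, by ext (_ | _) <;> simp⟩
  · rintro ⟨z, hz, hzt⟩
    have hz_inl (i : σ) : z (Sum.inl i) = s i := by simpa using congrFun hzt (some i)
    have hz_inr : z (Sum.inr j) = t := by simpa using congrFun hzt none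
    have hz_elim : Sum.elim s (z ∘ Sum.inr) = z := by ext (i | i) <;> simp [hz_inl]
    exact ⟨z ∘ Sum.inr, fun i => hz_elim.symm ▸ hz i, hz_inr⟩

variable [IsAlgClosed k] [Finite σ] [Finite τ] [Finite ι]

theorem exists_ncard_image_solutionFiber_le (P : ι → MvPolynomial (σ ⊕ τ) k) (j : τ) :
    ∃ B : ℕ, ∀ s : σ → k, (solutionFiber P s).Finite →
      (Function.eval j '' solutionFiber P s).ncard ≤ B := by
  have : Infinite k := IsAlgClosed.instInfinite
  obtain ⟨S, hS⟩ := exists_constructiblePoints_eq_image P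
    (fun o : Option σ => o.elim (X (Sum.inr j)) (fun i => X (Sum.inl i)))
  obtain ⟨B, hB⟩ := exists_ncard_constructiblePoints_fiber_le S
  refine ⟨B, fun s hfin => ?_⟩
  have image_eq : Function.eval j '' solutionFiber P s =
      {t : k | (fun o => Option.elim o t s) ∈ constructiblePoints S} :=
    Set.ext fun t => hS ▸ mem_image_solutionFiber_iff P j s t
  rw [image_eq]
  exact hB s (image_eq ▸ hfin.image _)

theorem exists_ncard_solutionFiber_le (P : ι → MvPolynomial (σ ⊕ τ) k) :
    ∃ B : ℕ, ∀ s : σ → k, (solutionFiber P s).Finite → (solutionFiber P s).ncard ≤ B := by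
  classical
  have := Fintype.ofFinite τ
  choose B hB using exists_ncard_image_solutionFiber_le P
  refine ⟨∏ j, B j, fun s hfin => ?_⟩
  have image_finite (j : τ) : (Function.eval j '' solutionFiber P s).Finite := hfin.image _
  let box := Fintype.piFinset fun j => (image_finite j).toFinset
  have subset_box : solutionFiber P s ⊆ box := fun x hx => by
    simp only [box, Finset.mem_coe, Fintype.mem_piFinset, Set.Finite.mem_toFinset]
    exact fun j => Set.mem_image_of_mem _ hx
  calc (solutionFiber P s).ncard ≤ box.card := by
        rw [← Set.ncard_coe_finset]
        exact Set.ncard_le_ncard subset_box box.finite_toSet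
    _ = ∏ j, (Function.eval j '' solutionFiber P s).ncard := by
        simp only [box, Fintype.card_piFinset, Set.ncard_eq_toFinset_card _ (image_finite _)]
    _ ≤ ∏ j, B j := Finset.prod_le_prod' fun j _ => hB j s hfin

end FiniteFibers

section Coordinates

theorem exists_basis_apply_eq_ite_of_span_eq_top {k W ι : Type*} [Field k] [AddCommGroup W]
    [Module k W] [FiniteDimensional k W] {d : ℕ} (hd : Module.finrank k W = d)
    {v : ι → Module.Dual k W} (hv : Submodule.span k (Set.range v) = ⊤) :
    ∃ (e : Fin d → ι) (b : Module.Basis (Fin d) k W),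
      ∀ i j, v (e j) (b i) = if i = j then 1 else 0 := by
  obtain ⟨κ, a, -, ha_span, ha_indep⟩ := exists_linearIndependent' k v
  let δ : Module.Basis κ k (Module.Dual k W) := .mk ha_indep (ha_span.trans hv).ge
  let r : κ ≃ Fin d :=
    δ.indexEquiv (Module.finBasisOfFinrankEq k _ (Subspace.dual_finrank_eq.trans hd))
  let γ := δ.reindex r
  refine ⟨a ∘ r.symm, γ.dualBasis.map (Module.evalEquiv k W).symm, fun i j => ?_⟩
  have hγ : v ((a ∘ r.symm) j) = γ j := by simp [γ, δ]
  rw [hγ, Module.Basis.map_apply, Module.apply_evalEquiv_symm_apply,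
    Module.Basis.dualBasis_apply_self]
  simp only [eq_comm]

theorem linearMap_apply_eq_sum_smul_single {R ν E : Type*} [Semiring R] [AddCommMonoid E]
    [Module R E] [Fintype ν] [DecidableEq ν] (φ : (ν → R) →ₗ[R] E) (u : ν → R) :
    φ u = ∑ i, u i • φ (Pi.single i 1) := by
  conv_lhs => rw [pi_eq_sum_univ' u]
  simp only [map_sum, map_smul]

theorem span_range_domRestrict_proj {k ν : Type*} [Field k] [Finite ν]
    (W : Submodule k (ν → k)) :
    Submodule.span k (Set.range fun i => (LinearMap.proj i : (ν → k) →ₗ[k] k).domRestrict W) =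
      ⊤ := by
  classical
  have := Fintype.ofFinite ν
  rw [eq_top_iff]
  rintro φ -
  obtain ⟨ψ, rfl⟩ := Subspace.dualRestrict_surjective φ
  rw [Submodule.mem_span_range_iff_exists_fun]
  refine ⟨fun i => ψ (Pi.single i 1), ?_⟩
  ext w
  simp [linearMap_apply_eq_sum_smul_single ψ w, mul_comm]

end Coordinates

section Subspaces

open Module

variable {k V : Type*} [Field k] [AddCommGroup V] [Module k V] {V' : Type*} [AddCommGroup V']
  [Module k V'] {K : Submodule k V} {j : V' →ₗ[k] V}

-- The images of `W` under the transvections `v ↦ v + (t * f v) • u`, for `t : k`, are pairwise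
-- distinct.
theorem infinite_setOf_le_and_finrank_eq [Infinite k] {W U : Submodule k V}
    (hWU : W < U) (hW : W ≠ ⊥) :
    {W' : Submodule k V | W' ≤ U ∧ finrank k W' = finrank k W}.Infinite := by
  obtain ⟨u, huU, huW⟩ := SetLike.exists_of_lt hWU
  obtain ⟨w₀, hw₀, hw₀_ne⟩ := W.exists_mem_ne_zero_of_ne_bot hW
  have hw₀_span : w₀ ∉ k ∙ u := by
    rintro h
    obtain ⟨r, rfl⟩ := Submodule.mem_span_singleton.1 h
    have hr : r ≠ 0 := fun hr => hw₀_ne (by simp [hr])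
    exact huW ((W.smul_mem_iff hr).1 hw₀)
  obtain ⟨f, hfw₀, hfu⟩ := Submodule.exists_le_ker_of_notMem hw₀_span
  replace hfu : f u = 0 := hfu (Submodule.mem_span_singleton_self u)
  have hftu (t : k) : f (t • u) = 0 := by rw [map_smul, hfu, smul_zero]
  refine Set.infinite_of_injective_forall_mem
    (f := fun t : k => W.map (LinearEquiv.transvection (hftu t)).toLinearMap) ?_ fun t => ⟨?_, ?_⟩
  · intro s t hst
    have h_mem : w₀ + f w₀ • s • u ∈ W.map (LinearEquiv.transvection (hftu t)).toLinearMap :=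
      (SetLike.ext_iff.1 hst _).1 (Submodule.mem_map_of_mem hw₀)
    obtain ⟨w, hw, h_eq : w + f w • t • u = w₀ + f w₀ • s • u⟩ := h_mem
    have hfw : f w = f w₀ := by simpa [hfu] using congrArg f h_eq
    by_contra hst_ne
    refine huW ((W.smul_mem_iff (mul_ne_zero hfw₀ (sub_ne_zero.2 hst_ne))).1 ?_)
    have h_diff : (f w₀ * (s - t)) • u = w - w₀ := by
      rw [hfw] at h_eq
      linear_combination (norm := module) -h_eq
    exact h_diff ▸ W.sub_mem hw hw₀
  · rintro _ ⟨w, hw, rfl⟩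
    exact U.add_mem (hWU.le hw) (U.smul_mem _ (U.smul_mem t huU))
  · exact LinearEquiv.finrank_map_eq _ W

theorem injective_sup_map_of_disjoint_range (hj : Function.Injective j)
    (hK : Disjoint K (LinearMap.range j)) :
    Function.Injective fun T : Submodule k V' => K ⊔ T.map j := by
  have h_inf (T : Submodule k V') : (K ⊔ T.map j) ⊓ LinearMap.range j = T.map j := by
    rw [sup_comm, sup_inf_assoc_of_le K LinearMap.map_le_range, hK.eq_bot, sup_bot_eq]
  intro T T' h
  apply Submodule.map_injective_of_injective hj
  rw [← h_inf T, ← h_inf T', show K ⊔ T.map j = K ⊔ T'.map j from h]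

variable [FiniteDimensional k V]

theorem exists_finset_forall_le_sup_sup (𝒮 : Set (Submodule k V)) (m : ℕ) (U : Submodule k V)
    (hU : finrank k V ≤ finrank k U + m) :
    ∃ G : Finset (Submodule k V), ↑G ⊆ 𝒮 ∧ G.card ≤ m ∧ ∀ W ∈ 𝒮, W ≤ U ⊔ G.sup id := by
  classical
  induction m generalizing U with
  | zero =>
    have hU_top : U = ⊤ := Submodule.eq_top_of_finrank_eq (U.finrank_le.antisymm hU)
    exact ⟨∅, by simp, by simp, by simp [hU_top]⟩
  | succ m ih =>
    by_cases hU_le : ∀ W ∈ 𝒮, W ≤ U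
    · exact ⟨∅, by simp, by simp, by simpa using hU_le⟩
    push Not at hU_le
    obtain ⟨W, hW, hWU⟩ := hU_le
    have h_lt := Submodule.finrank_lt_finrank_of_lt (left_lt_sup.2 hWU)
    obtain ⟨G, hG, hG_card, hG_sup⟩ := ih (U ⊔ W) (by omega)
    refine ⟨insert W G, ?_, (Finset.card_insert_le _ _).trans (by omega), fun W' hW' => ?_⟩
    · simp [Set.insert_subset_iff, hW, hG]
    · simpa [sup_assoc] using hG_sup W' hW'

theorem finrank_le_finrank_inf_add_mul_card (c : ℕ) (G : Finset (Submodule k V))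
    (hG : ∀ W ∈ G, finrank k V ≤ finrank k W + c) :
    finrank k V ≤ finrank k (G.inf id : Submodule k V) + c * G.card := by
  classical
  induction G using Finset.induction_on with
  | empty => rw [Finset.inf_empty, finrank_top]; exact Nat.le_add_right _ _
  | insert W G hW ih =>
    have h_inf := ih fun W' hW' => hG W' (Finset.mem_insert_of_mem hW')
    have h_W := hG W (Finset.mem_insert_self _ _)
    have h_sum := Submodule.finrank_sup_add_finrank_inf_eq W (G.inf id)
    have h_sup := Submodule.finrank_le (W ⊔ G.inf id)
    rw [Finset.card_insert_of_notMem hW, Finset.inf_insert, mul_add, id]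
    omega

theorem exists_injective_fin_disjoint_sup_range_eq {K U : Submodule k V} (hKU : K ≤ U) :
    ∃ (n : ℕ) (j : (Fin n → k) →ₗ[k] V), finrank k K + n = finrank k U ∧
      Function.Injective j ∧ Disjoint K (LinearMap.range j) ∧ K ⊔ LinearMap.range j = U := by
  obtain ⟨M, hKM, rfl⟩ := IsModularLattice.exists_disjoint_and_sup_eq hKU
  let j := M.subtype ∘ₗ (finBasis k M).equivFun.symm.toLinearMap
  have hj_range : LinearMap.range j = M := by simp [j, LinearMap.range_comp]
  refine ⟨finrank k M, j, ?_, ?_, by rwa [hj_range], by rw [hj_range]⟩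
  · rw [← Submodule.finrank_sup_add_finrank_inf_eq K M, hKM.eq_bot, finrank_bot, add_zero]
  · exact M.injective_subtype.comp (LinearEquiv.injective _)

theorem finrank_sup_map_of_disjoint_range (hj : Function.Injective j)
    (hK : Disjoint K (LinearMap.range j)) (T : Submodule k V') :
    finrank k ↥(K ⊔ T.map j) = finrank k K + finrank k T := by
  have h_disj : Disjoint K (T.map j) := hK.mono_right (LinearMap.map_le_range)
  have h_sum := Submodule.finrank_sup_add_finrank_inf_eq K (T.map j)
  rw [h_disj.eq_bot, finrank_bot, add_zero] at h_sum
  rw [h_sum, ← (Submodule.equivMapOfInjective j hj T).finrank_eq]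

end Subspaces

/-- Trilinear forms on an `R`-module, in curried form. -/
abbrev TrilinearForm (R M : Type*) [CommRing R] [AddCommGroup M] [Module R M] : Type _ :=
  M →ₗ[R] M →ₗ[R] M →ₗ[R] R

namespace TrilinearForm

section Basic

variable {R M M' : Type*} [CommRing R] [AddCommGroup M] [Module R M] [AddCommGroup M'] [Module R M']

/-- A trilinear form is symmetric if it is invariant under the two adjacent transpositions of its
arguments, hence under all permutations. -/
structure IsSymm (F : TrilinearForm R M) : Prop where
  swap_left : ∀ a b c, F a b c = F b a c
  swap_right : ∀ a b c, F a b c = F a c b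

/-- `F.VanishesOn A B C` says that `F` is zero on `A × B × C`. -/
def VanishesOn (F : TrilinearForm R M) (A B C : Submodule R M) : Prop :=
  ∀ a ∈ A, ∀ b ∈ B, ∀ c ∈ C, F a b c = 0

/-- A subspace is isotropic for `F` if the restriction of `F` to it is zero. For the polar form of
a cubic form these are the linear subspaces of the cubic cone. -/
def IsIsotropic (F : TrilinearForm R M) (W : Submodule R M) : Prop :=
  F.VanishesOn W W W

/-- The isotropic subspaces of rank `d`. -/
def isotropicSubspaces (F : TrilinearForm R M) (d : ℕ) : Set (Submodule R M) :=
  {W | Module.finrank R W = d ∧ F.IsIsotropic W}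

/-- The pullback of a trilinear form along a linear map. -/
def pullback (F : TrilinearForm R M) (j : M' →ₗ[R] M) : TrilinearForm R M' :=
  (F.compl₁₂ j j).compr₂ (LinearMap.lcomp R R j)

@[simp]
theorem pullback_apply (F : TrilinearForm R M) (j : M' →ₗ[R] M) (a b c : M') :
    F.pullback j a b c = F (j a) (j b) (j c) :=
  rfl

variable {F : TrilinearForm R M} {A A' B B' C C' W : Submodule R M}

theorem VanishesOn.mono (h : F.VanishesOn A B C) (hA : A' ≤ A) (hB : B' ≤ B) (hC : C' ≤ C) :
    F.VanishesOn A' B' C' :=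
  fun a ha b hb c hc => h a (hA ha) b (hB hb) c (hC hc)

theorem VanishesOn.sup_left (h : F.VanishesOn A B C) (h' : F.VanishesOn A' B C) :
    F.VanishesOn (A ⊔ A') B C := by
  intro x hx b hb c hc
  obtain ⟨a, ha, a', ha', rfl⟩ := Submodule.mem_sup.1 hx
  simp [h a ha b hb c hc, h' a' ha' b hb c hc]

theorem VanishesOn.swap_left (h : F.VanishesOn A B C) (hF : F.IsSymm) : F.VanishesOn B A C :=
  fun b hb a ha c hc => hF.swap_left b a c ▸ h a ha b hb c hc

theorem VanishesOn.swap_right (h : F.VanishesOn A B C) (hF : F.IsSymm) : F.VanishesOn A C B :=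
  fun a ha c hc b hb => hF.swap_right a c b ▸ h a ha b hb c hc

theorem VanishesOn.sup_middle (h : F.VanishesOn A B C) (h' : F.VanishesOn A B' C)
    (hF : F.IsSymm) : F.VanishesOn A (B ⊔ B') C :=
  ((h.swap_left hF).sup_left (h'.swap_left hF)).swap_left hF

theorem VanishesOn.sup_right (h : F.VanishesOn A B C) (h' : F.VanishesOn A B C')
    (hF : F.IsSymm) : F.VanishesOn A B (C ⊔ C') :=
  ((h.swap_right hF).sup_middle (h'.swap_right hF) hF).swap_right hF

theorem IsIsotropic.sup_of_vanishesOn {K U : Submodule R M} (hW : F.IsIsotropic W)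
    (hF : F.IsSymm) (hK : F.VanishesOn K U U) (hKU : K ≤ U) (hWU : W ≤ U) :
    F.IsIsotropic (K ⊔ W) := by
  have hKWU : K ⊔ W ≤ U := sup_le hKU hWU
  have h_right : F.VanishesOn W W (K ⊔ W) :=
    (((hK.mono le_rfl hWU hWU).swap_left hF).swap_right hF).sup_right hW hF
  have h_middle : F.VanishesOn W (K ⊔ W) (K ⊔ W) :=
    ((hK.mono le_rfl hWU hKWU).swap_left hF).sup_middle h_right hF
  exact (hK.mono le_rfl hKWU hKWU).sup_left h_middle

theorem vanishesOn_inf_inf_sup {G : Finset (Submodule R M)} (hG : ∀ W ∈ G, F.IsIsotropic W) :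
    F.VanishesOn (G.inf id) (G.inf id) (G.sup id) := by
  intro a ha b hb
  suffices G.sup id ≤ LinearMap.ker (F a b) from fun c hc => this hc
  refine Finset.sup_le fun W hW c hc => ?_
  have h_inf : G.inf id ≤ W := Finset.inf_le (f := id) hW
  exact hG W hW a (h_inf ha) b (h_inf hb) c hc

theorem isIsotropic_span_range {ι : Type*} [Finite ι] {x : ι → M}
    (h : ∀ a b c, F (x a) (x b) (x c) = 0) : F.IsIsotropic (Submodule.span R (Set.range x)) := by
  have := Fintype.ofFinite ι
  intro u hu v hv w hw
  obtain ⟨α, rfl⟩ := (Submodule.mem_span_range_iff_exists_fun R).1 hu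
  obtain ⟨β, rfl⟩ := (Submodule.mem_span_range_iff_exists_fun R).1 hv
  obtain ⟨γ, rfl⟩ := (Submodule.mem_span_range_iff_exists_fun R).1 hw
  simp [h]

theorem isIsotropic_map_iff (j : M' →ₗ[R] M) (W : Submodule R M') :
    F.IsIsotropic (W.map j) ↔ (F.pullback j).IsIsotropic W := by
  simp only [IsIsotropic, VanishesOn, Submodule.mem_map, forall_exists_index, and_imp,
    forall_apply_eq_imp_iff₂, pullback_apply]

end Basic

section Polarization

variable {R M : Type*} [CommRing R] [AddCommGroup M] [Module R M]

theorem isIsotropic_iff_forall_apply_self_eq_zero [NoZeroDivisors R] (h6 : (6 : R) ≠ 0)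
    {F : TrilinearForm R M} (hF : F.IsSymm) {W : Submodule R M} :
    F.IsIsotropic W ↔ ∀ w ∈ W, F w w w = 0 := by
  refine ⟨fun h w hw => h w hw w hw w hw, fun h a ha b hb c hc => ?_⟩
  -- The polarization identity: `6 F(a, b, c)` is an alternating sum of cubes of partial sums.
  have hbc := h _ (W.add_mem hb hc)
  have hac := h _ (W.add_mem ha hc)
  have hab := h _ (W.add_mem ha hb)
  have habc := h _ (W.add_mem (W.add_mem ha hb) hc)
  refine (mul_eq_zero.1 ?_).resolve_left h6
  simp only [map_add, LinearMap.add_apply] at hbc hac hab habc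
  linear_combination habc - hbc - hac - hab + h a ha + h b hb + h c hc -
    3 * hF.swap_right a c b - 2 * hF.swap_left b a c - hF.swap_right b c a -
    2 * hF.swap_left c a b - hF.swap_right c b a

/-- The symmetrized product of three linear functionals: the sum over all permutations of
`φ a * ψ b * χ c`. -/
def symmProd (φ ψ χ : Module.Dual R M) : TrilinearForm R M :=
  φ.smulRight (ψ.smulRight χ + χ.smulRight ψ) + ψ.smulRight (φ.smulRight χ + χ.smulRight φ) +
    χ.smulRight (φ.smulRight ψ + ψ.smulRight φ)

theorem symmProd_apply (φ ψ χ : Module.Dual R M) (a b c : M) :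
    symmProd φ ψ χ a b c =
      φ a * (ψ b * χ c + χ b * ψ c) + ψ a * (φ b * χ c + χ b * φ c) +
        χ a * (φ b * ψ c + ψ b * φ c) := by
  simp [symmProd, mul_add]

theorem isSymm_symmProd (φ ψ χ : Module.Dual R M) : (symmProd φ ψ χ).IsSymm where
  swap_left a b c := by rw [symmProd_apply, symmProd_apply]; ring
  swap_right a b c := by rw [symmProd_apply, symmProd_apply]; ring

theorem symmProd_apply_self (φ ψ χ : Module.Dual R M) (v : M) :
    symmProd φ ψ χ v v v = 6 * (φ v * ψ v * χ v) := by
  rw [symmProd_apply]; ring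

theorem IsSymm.add {F G : TrilinearForm R M} (hF : F.IsSymm) (hG : G.IsSymm) : (F + G).IsSymm where
  swap_left a b c := by simp [hF.swap_left a b c, hG.swap_left a b c]
  swap_right a b c := by simp [hF.swap_right a b c, hG.swap_right a b c]

theorem IsSymm.smul {F : TrilinearForm R M} (hF : F.IsSymm) (r : R) : (r • F).IsSymm where
  swap_left a b c := by simp [hF.swap_left a b c]
  swap_right a b c := by simp [hF.swap_right a b c]

open MvPolynomial in
theorem mem_span_X_mul_X_mul_X_of_isHomogeneous {σ : Type*} {f : MvPolynomial σ R}
    (hf : f.IsHomogeneous 3) :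
    f ∈ Submodule.span R
      (Set.range fun p : σ × σ × σ => (X p.1 * X p.2.1 * X p.2.2 : MvPolynomial σ R)) := by
  classical
  rw [f.as_sum]
  refine Submodule.sum_mem _ fun m hm => ?_
  have hm_card : Multiset.card m.toMultiset = 3 := by
    rw [Finsupp.card_toMultiset, ← hf (mem_support_iff.1 hm)]
    simp [Finsupp.weight_apply, Finsupp.sum]
  obtain ⟨i, j, l, hijl⟩ := Multiset.card_eq_three.1 hm_card
  have hm_sum : m = Finsupp.single i 1 + Finsupp.single j 1 + Finsupp.single l 1 := by
    rw [Finsupp.toMultiset_eq_iff.1 hijl]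
    simp [Multiset.insert_eq_cons, ← Multiset.singleton_add, add_assoc]
  have hm_monomial : monomial m (coeff m f) = coeff m f • (X i * X j * X l) := by
    rw [hm_sum]; simp [X, monomial_mul, smul_monomial]
  exact hm_monomial ▸ Submodule.smul_mem _ _ (Submodule.subset_span ⟨(i, j, l), rfl⟩)

open MvPolynomial in
theorem exists_isSymm_apply_self_eq_six_mul_eval {σ : Type*} {f : MvPolynomial σ R}
    (hf : f.IsHomogeneous 3) :
    ∃ F : TrilinearForm R (σ → R), F.IsSymm ∧ ∀ v, F v v v = 6 * eval v f := by
  replace hf := mem_span_X_mul_X_mul_X_of_isHomogeneous hf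
  induction hf using Submodule.span_induction with
  | mem p hp =>
    obtain ⟨⟨i, j, l⟩, rfl⟩ := hp
    refine ⟨symmProd (.proj i) (.proj j) (.proj l), isSymm_symmProd _ _ _, fun v => ?_⟩
    simp [symmProd_apply_self]
  | zero => exact ⟨0, ⟨fun _ _ _ => rfl, fun _ _ _ => rfl⟩, fun v => by simp⟩
  | add p q _ _ hp hq =>
    obtain ⟨F, hF, hFp⟩ := hp
    obtain ⟨G, hG, hGq⟩ := hq
    exact ⟨F + G, hF.add hG, fun v => by simp [hFp, hGq, mul_add]⟩
  | smul r p _ hp =>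
    obtain ⟨F, hF, hFp⟩ := hp
    exact ⟨r • F, hF.smul r, fun v => by simp [hFp, mul_left_comm]⟩

end Polarization

section FixedDimension

open MvPolynomial

variable {R κ ν : Type*} [CommRing R]

/-- The matrices `x` whose columns `e j` form the identity matrix and on whose rows `F` vanishes.
Taking the row span identifies them with the isotropic subspaces lying in the affine chart of the
Grassmannian given by `e`. -/
def normalizedFrames [DecidableEq κ] (F : TrilinearForm R (ν → R)) (e : κ → ν) :
    Set (κ × ν → R) :=
  {x | (∀ i j, x (i, e j) = if i = j then 1 else 0) ∧
    ∀ a b c, F (Function.curry x a) (Function.curry x b) (Function.curry x c) = 0}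

/-- The span of the rows of a matrix. -/
def rowSpan (x : κ × ν → R) : Submodule R (ν → R) :=
  Submodule.span R (Set.range (Function.curry x))

/-- The equations defining `normalizedFrames F e`. The variables `Sum.inl (i, j, l)` stand for the
coefficients of `F`, and `Sum.inr (i, j)` for the entries of the matrix. -/
noncomputable def frameEquations (R : Type*) [CommRing R] [DecidableEq κ] [Fintype ν] (e : κ → ν) :
    κ × κ ⊕ κ × κ × κ → MvPolynomial (ν × ν × ν ⊕ κ × ν) R
  | .inl (i, j) => X (.inr (i, e j)) - C (if i = j then 1 else 0)
  | .inr (a, b, c) => ∑ i, ∑ j, ∑ l,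
      X (.inr (a, i)) * X (.inr (b, j)) * X (.inr (c, l)) * X (.inl (i, j, l))

theorem apply_eq_sum [Fintype ν] [DecidableEq ν] (F : TrilinearForm R (ν → R)) (u v w : ν → R) :
    F u v w = ∑ i, ∑ j, ∑ l,
      u i * v j * w l * F (Pi.single i 1) (Pi.single j 1) (Pi.single l 1) := by
  rw [linearMap_apply_eq_sum_smul_single F u]
  simp only [LinearMap.sum_apply, LinearMap.smul_apply, smul_eq_mul]
  refine Finset.sum_congr rfl fun i _ => ?_
  rw [linearMap_apply_eq_sum_smul_single (F _) v]
  simp only [LinearMap.sum_apply, LinearMap.smul_apply, smul_eq_mul, Finset.mul_sum]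
  refine Finset.sum_congr rfl fun j _ => ?_
  rw [linearMap_apply_eq_sum_smul_single (F _ _) w]
  simp only [smul_eq_mul, Finset.mul_sum, mul_assoc]

theorem normalizedFrames_eq_solutionFiber [DecidableEq κ] [Fintype ν] [DecidableEq ν]
    (F : TrilinearForm R (ν → R)) (e : κ → ν) :
    normalizedFrames F e = solutionFiber (frameEquations R e)
      fun p => F (Pi.single p.1 1) (Pi.single p.2.1 1) (Pi.single p.2.2 1) := by
  ext x
  simp only [normalizedFrames, solutionFiber, Set.mem_ofPred_eq, Sum.forall, Prod.forall,
    frameEquations, map_sub, map_sum, map_mul, eval_X, eval_C, Sum.elim_inl, Sum.elim_inr,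
    sub_eq_zero, apply_eq_sum F (Function.curry x _), Function.curry_apply]

theorem sum_smul_curry_apply_of_normalized [Fintype κ] [DecidableEq κ] {x : κ × ν → R} {e : κ → ν}
    (hx : ∀ i j, x (i, e j) = if i = j then 1 else 0) (t : κ → R) (j : κ) :
    (∑ i, t i • Function.curry x i) (e j) = t j := by
  simp [Finset.sum_apply, hx]

theorem linearIndependent_curry_of_normalized [Finite κ] [DecidableEq κ] {x : κ × ν → R} {e : κ → ν}
    (hx : ∀ i j, x (i, e j) = if i = j then 1 else 0) :
    LinearIndependent R (Function.curry x) := by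
  have := Fintype.ofFinite κ
  refine Fintype.linearIndependent_iff.2 fun t ht j => ?_
  rw [← sum_smul_curry_apply_of_normalized hx t j, ht, Pi.zero_apply]

-- A vector of the row span is determined by its entries in the columns `e j`.
theorem injOn_rowSpan_normalizedFrames [Finite κ] [DecidableEq κ]
    (F : TrilinearForm R (ν → R)) (e : κ → ν) : Set.InjOn rowSpan (normalizedFrames F e) := by
  have := Fintype.ofFinite κ
  intro x hx y hy hxy
  suffices h_row : ∀ i, Function.curry x i = Function.curry y i from
    funext fun p => congrFun (h_row p.1) p.2
  intro i
  have hxi : Function.curry x i ∈ rowSpan y := hxy ▸ Submodule.subset_span ⟨i, rfl⟩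
  obtain ⟨t, ht⟩ := (Submodule.mem_span_range_iff_exists_fun R).1 hxi
  have ht_coord : ∀ j, t j = if i = j then 1 else 0 := fun j => by
    rw [← sum_smul_curry_apply_of_normalized hy.1 t j, ht, Function.curry_apply, hx.1]
  rw [← ht]
  simp [ht_coord]

variable {k : Type*} [Field k] {d : ℕ}

theorem rowSpan_mem_isotropicSubspaces {F : TrilinearForm k (ν → k)} {e : Fin d → ν}
    {x : Fin d × ν → k} (hx : x ∈ normalizedFrames F e) : rowSpan x ∈ isotropicSubspaces F d :=
  ⟨(finrank_span_eq_card (linearIndependent_curry_of_normalized hx.1)).trans (Fintype.card_fin d),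
    isIsotropic_span_range hx.2⟩

theorem exists_ncard_normalizedFrames_le [IsAlgClosed k] [Finite κ] [DecidableEq κ] [Finite ν]
    (e : κ → ν) :
    ∃ B : ℕ, ∀ F : TrilinearForm k (ν → k),
      (normalizedFrames F e).Finite → (normalizedFrames F e).ncard ≤ B := by
  classical
  have := Fintype.ofFinite ν
  obtain ⟨B, hB⟩ := exists_ncard_solutionFiber_le (frameEquations k e)
  exact ⟨B, fun F hF => by rw [normalizedFrames_eq_solutionFiber] at hF ⊢; exact hB _ hF⟩

theorem exists_rowSpan_eq_of_mem_isotropicSubspaces [Finite ν] {F : TrilinearForm k (ν → k)}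
    {W : Submodule k (ν → k)} (hW : W ∈ isotropicSubspaces F d) :
    ∃ e : Fin d → ν, ∃ x ∈ normalizedFrames F e, rowSpan x = W := by
  obtain ⟨e, b, hb⟩ :=
    exists_basis_apply_eq_ite_of_span_eq_top hW.1 (span_range_domRestrict_proj W)
  refine ⟨e, fun p => (b p.1 : ν → k) p.2, ⟨hb, fun p q r => ?_⟩, ?_⟩
  · exact hW.2 _ (b p).2 _ (b q).2 _ (b r).2
  · calc Submodule.span k (Set.range (W.subtype ∘ b))
        = (Submodule.span k (Set.range b)).map W.subtype := by
          rw [Set.range_comp, Submodule.map_span]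
      _ = W := by rw [b.span_eq, Submodule.map_subtype_top]

theorem exists_ncard_isotropicSubspaces_pi_le (k : Type*) [Field k] [IsAlgClosed k] (ν : Type*)
    [Finite ν] (d : ℕ) :
    ∃ B : ℕ, ∀ F : TrilinearForm k (ν → k),
      (isotropicSubspaces F d).Finite → (isotropicSubspaces F d).ncard ≤ B := by
  have := Fintype.ofFinite (Fin d → ν)
  choose B hB using fun e : Fin d → ν => exists_ncard_normalizedFrames_le (k := k) e
  refine ⟨∑ e, B e, fun F hF => ?_⟩
  have h_maps (e) : rowSpan '' normalizedFrames F e ⊆ isotropicSubspaces F d :=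
    Set.image_subset_iff.2 fun x hx => rowSpan_mem_isotropicSubspaces hx
  have h_finite (e) : (normalizedFrames F e).Finite :=
    (hF.subset (h_maps e)).of_finite_image (injOn_rowSpan_normalizedFrames F e)
  calc (isotropicSubspaces F d).ncard
      ≤ (⋃ e, rowSpan '' normalizedFrames F e).ncard := by
        refine Set.ncard_le_ncard (fun W hW => ?_) (hF.subset (Set.iUnion_subset h_maps))
        simpa using exists_rowSpan_eq_of_mem_isotropicSubspaces hW
    _ ≤ ∑ e, (rowSpan '' normalizedFrames F e).ncard := by
        simpa using Finset.univ.set_ncard_biUnion_le fun e => rowSpan '' normalizedFrames F e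
    _ ≤ ∑ e, B e := Finset.sum_le_sum fun e _ =>
        (Set.ncard_image_le (h_finite e)).trans (hB e F (h_finite e))

theorem exists_ncard_isotropicSubspaces_fin_le (k : Type*) [Field k] [IsAlgClosed k] (N : ℕ) :
    ∃ B : ℕ, ∀ n ≤ N, ∀ d, ∀ F : TrilinearForm k (Fin n → k),
      (isotropicSubspaces F d).Finite → (isotropicSubspaces F d).ncard ≤ B := by
  choose B hB using fun n d => exists_ncard_isotropicSubspaces_pi_le k (Fin n) d
  refine ⟨(Finset.range (N + 1) ×ˢ Finset.range (N + 1)).sup fun p => B p.1 p.2,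
    fun n hn d F hF => ?_⟩
  rcases (isotropicSubspaces F d).eq_empty_or_nonempty with h_empty | ⟨W, hW⟩
  · simp [h_empty]
  · have hd : d ≤ n := by simpa [hW.1] using W.finrank_le
    refine (hB n d F hF).trans (Finset.le_sup (f := fun p : ℕ × ℕ => B p.1 p.2) (b := (n, d)) ?_)
    simp only [Finset.mem_product, Finset.mem_range]
    omega

end FixedDimension

section Reduction

open Module

variable {k V : Type*} [Field k] [AddCommGroup V] [Module k V]
  {F : TrilinearForm k V} {d : ℕ} {W U : Submodule k V}

theorem le_of_isIsotropic_of_finite_isotropicSubspaces [Infinite k] (hd : d ≠ 0)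
    (hfin : (isotropicSubspaces F d).Finite) (hW : W ∈ isotropicSubspaces F d) (hWU : W ≤ U)
    (hU : F.IsIsotropic U) : U ≤ W := by
  by_contra hUW
  have hW_ne : W ≠ ⊥ := by
    rintro rfl
    exact hd (hW.1.symm.trans (finrank_bot k V))
  refine infinite_setOf_le_and_finrank_eq (lt_of_le_not_ge hWU hUW) hW_ne (hfin.subset ?_)
  exact fun W' ⟨hW'U, hW'_finrank⟩ => ⟨hW'_finrank.trans hW.1, hU.mono hW'U hW'U hW'U⟩

variable [FiniteDimensional k V]

-- `K` is the subspace of `I` orthogonal to `C × C`, where `C` is a complement of `I` in `U`.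
theorem exists_le_vanishesOn_of_vanishesOn (hF : F.IsSymm) {I : Submodule k V} {D : ℕ}
    (hIU : I ≤ U) (hD : finrank k U ≤ finrank k I + D) (hI : F.VanishesOn I I U) :
    ∃ K ≤ I, finrank k U ≤ finrank k K + (D + D * D) ∧ F.VanishesOn K U U := by
  obtain ⟨C, hIC, rfl⟩ := IsModularLattice.exists_disjoint_and_sup_eq hIU
  let L : I →ₗ[k] C →ₗ[k] C →ₗ[k] k :=
    (F.compl₁₂ I.subtype C.subtype).compr₂ (LinearMap.lcomp k k C.subtype)
  have hKI : (LinearMap.ker L).map I.subtype ≤ I := I.map_subtype_le _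
  refine ⟨(LinearMap.ker L).map I.subtype, hKI, ?_, ?_⟩
  · have hC : finrank k C ≤ D := by
      have h_sum := Submodule.finrank_sup_add_finrank_inf_eq I C
      rw [hIC.eq_bot, finrank_bot] at h_sum
      omega
    have hL_range : finrank k (LinearMap.range L) ≤ D * D := by
      refine (Submodule.finrank_le _).trans ?_
      rw [finrank_linearMap, finrank_linearMap, finrank_self, mul_one]
      exact Nat.mul_le_mul hC hC
    have hL := LinearMap.finrank_range_add_finrank_ker (V₂ := C →ₗ[k] C →ₗ[k] k) L
    rw [Submodule.finrank_map_subtype_eq]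
    omega
  · have hK_CC : F.VanishesOn ((LinearMap.ker L).map I.subtype) C C := by
      rintro _ ⟨v, hv, rfl⟩ x hx y hy
      exact LinearMap.congr_fun₂ hv (⟨x, hx⟩ : C) (⟨y, hy⟩ : C)
    have hK_I := hI.mono hKI le_rfl le_rfl
    have hK_C := ((hK_I.mono le_rfl le_rfl le_sup_right).swap_right hF).sup_right hK_CC hF
    exact hK_I.sup_middle hK_C hF

theorem exists_vanishesOn_forall_mem_isotropicSubspaces_le [Infinite k] (hF : F.IsSymm) {c : ℕ}
    (hd : d ≠ 0) (hV : finrank k V = d + c) (hfin : (isotropicSubspaces F d).Finite)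
    (hne : (isotropicSubspaces F d).Nonempty) :
    ∃ K U : Submodule k V, K ≤ U ∧ F.VanishesOn K U U ∧
      finrank k U ≤ finrank k K + (c * (c + 1) + c * (c + 1) * (c * (c + 1))) ∧
      ∀ W ∈ isotropicSubspaces F d, K ≤ W ∧ W ≤ U := by
  classical
  obtain ⟨W₀, hW₀⟩ := hne
  obtain ⟨G₀, hG₀, hG₀_card, hG₀_sup⟩ :=
    exists_finset_forall_le_sup_sup (isotropicSubspaces F d) c W₀ (by rw [hW₀.1, hV])
  let G := insert W₀ G₀
  have hG : ∀ W ∈ G, W ∈ isotropicSubspaces F d := Finset.forall_mem_insert _ _ _ |>.2 ⟨hW₀, hG₀⟩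
  have hG_card : G.card ≤ c + 1 := (Finset.card_insert_le _ _).trans (by omega)
  have hG_sup : ∀ W ∈ isotropicSubspaces F d, W ≤ G.sup id := by simpa [G] using hG₀_sup
  have hI_sup : G.inf id ≤ G.sup id :=
    (Finset.inf_le (f := id) (Finset.mem_insert_self _ _)).trans (hG_sup W₀ hW₀)
  have hI_finrank : finrank k (G.sup id : Submodule k V) ≤
      finrank k (G.inf id : Submodule k V) + c * (c + 1) := calc
    _ ≤ finrank k V := Submodule.finrank_le _
    _ ≤ _ := finrank_le_finrank_inf_add_mul_card c G fun W hW => by rw [(hG W hW).1, hV]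
    _ ≤ _ := Nat.add_le_add_left (Nat.mul_le_mul_left _ hG_card) _
  obtain ⟨K, hKI, hK_finrank, hK⟩ := exists_le_vanishesOn_of_vanishesOn hF hI_sup hI_finrank
    (vanishesOn_inf_inf_sup fun W hW => (hG W hW).2)
  have hKU := hKI.trans hI_sup
  refine ⟨K, G.sup id, hKU, hK, hK_finrank, fun W hW => ⟨?_, hG_sup W hW⟩⟩
  exact le_sup_left.trans (le_of_isIsotropic_of_finite_isotropicSubspaces hd hfin hW le_sup_right
    (hW.2.sup_of_vanishesOn hF hK hKU (hG_sup W hW)))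

theorem bijOn_sup_map_isotropicSubspaces_pullback {V' : Type*} [AddCommGroup V'] [Module k V']
    (hF : F.IsSymm) {K : Submodule k V} {j : V' →ₗ[k] V} (hj : Function.Injective j)
    (hKj : Disjoint K (LinearMap.range j)) (hKU : K ⊔ LinearMap.range j = U)
    (hK : F.VanishesOn K U U)
    (h_between : ∀ W ∈ isotropicSubspaces F (finrank k K + d), K ≤ W ∧ W ≤ U) :
    Set.BijOn (fun T => K ⊔ T.map j) (isotropicSubspaces (F.pullback j) d)
      (isotropicSubspaces F (finrank k K + d)) := by
  have hKU_le : K ≤ U := hKU ▸ le_sup_left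
  have h_map_le (T : Submodule k V') : T.map j ≤ U :=
    LinearMap.map_le_range.trans (hKU ▸ le_sup_right)
  refine ⟨fun T hT => ⟨?_, ?_⟩, (injective_sup_map_of_disjoint_range hj hKj).injOn, fun W hW => ?_⟩
  · rw [finrank_sup_map_of_disjoint_range hj hKj, hT.1]
  · exact ((isIsotropic_map_iff j T).2 hT.2).sup_of_vanishesOn hF hK hKU_le (h_map_le T)
  · obtain ⟨hKW, hWU⟩ := h_between W hW
    have h_sup : K ⊔ (W.comap j).map j = W := by
      rw [Submodule.map_comap_eq, ← sup_inf_assoc_of_le _ hKW, hKU, inf_eq_right.2 hWU]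
    have h_finrank := finrank_sup_map_of_disjoint_range hj hKj (W.comap j)
    rw [h_sup, hW.1] at h_finrank
    have h_le : (W.comap j).map j ≤ W := Submodule.map_comap_le j W
    exact ⟨W.comap j, ⟨by omega, (isIsotropic_map_iff j _).1 (hW.2.mono h_le h_le h_le)⟩, h_sup⟩

theorem exists_ncard_isotropicSubspaces_le (k : Type*) [Field k] [IsAlgClosed k] (c : ℕ) :
    ∃ B : ℕ, ∀ {V : Type*} [AddCommGroup V] [Module k V] [FiniteDimensional k V]
      {F : TrilinearForm k V}, F.IsSymm → ∀ {d : ℕ}, finrank k V = d + c →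
      (isotropicSubspaces F d).Finite → (isotropicSubspaces F d).ncard ≤ B := by
  obtain ⟨B, hB⟩ := exists_ncard_isotropicSubspaces_fin_le k
    (c * (c + 1) + c * (c + 1) * (c * (c + 1)))
  refine ⟨max 1 B, fun {V} _ _ _ {F} hF {d} hV hfin => ?_⟩
  have := IsAlgClosed.instInfinite (K := k)
  rcases (isotropicSubspaces F d).eq_empty_or_nonempty with h_empty | hne
  · simp [h_empty]
  rcases eq_or_ne d 0 with rfl | hd
  · refine le_max_of_le_left (Set.ncard_le_one hfin |>.2 fun W hW W' hW' => ?_)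
    rw [Submodule.finrank_eq_zero.1 hW.1, Submodule.finrank_eq_zero.1 hW'.1]
  obtain ⟨K, U, hKU, hK, hU_finrank, h_between⟩ :=
    exists_vanishesOn_forall_mem_isotropicSubspaces_le hF hd hV hfin hne
  obtain ⟨n, j, hn, hj, hKj, h_sup⟩ := exists_injective_fin_disjoint_sup_range_eq hKU
  obtain ⟨W, hW⟩ := hne
  obtain ⟨d', rfl⟩ : ∃ d', d = finrank k K + d' :=
    Nat.exists_eq_add_of_le (hW.1 ▸ Submodule.finrank_mono (h_between W hW).1)
  have h_bij := bijOn_sup_map_isotropicSubspaces_pullback hF hj hKj h_sup hK h_between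
  rw [← h_bij.ncard_eq]
  exact le_max_of_le_right (hB n (by omega) d' _ (h_bij.finite_iff_finite.2 hfin))

theorem setOf_finrank_quotient_eq_and_forall_eq_zero (h6 : (6 : k) ≠ 0) (hF : F.IsSymm)
    {g : V → k} (hg : ∀ v, F v v v = 6 * g v) {c : ℕ} (hV : finrank k V = d + c) :
    {W : Submodule k V | finrank k (V ⧸ W) = c ∧ ∀ w ∈ W, g w = 0} = isotropicSubspaces F d := by
  ext W
  have h_finrank := W.finrank_quotient_add_finrank
  refine and_congr (by omega) ?_
  simp [isIsotropic_iff_forall_apply_self_eq_zero h6 hF, hg, h6]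

end Reduction

end TrilinearForm

/-- Uniform bound on linear subspaces of cubic hypersurfaces: for every `c > 0` there is
a bound `B` such that for every `n` and every nonzero cubic form `f` in `n` variables,
if the set of codimension-`c` linear subspaces of `kⁿ` on which `f` vanishes is finite,
then it has at most `B` elements. -/
theorem bounded_linear_subspaces {k : Type*} [Field k] [IsAlgClosed k]
    (h2 : (2 : k) ≠ 0) (h3 : (3 : k) ≠ 0) (c : ℕ) (hc : 0 < c) :
    ∃ B : ℕ, ∀ (n : ℕ) (f : MvPolynomial (Fin n) k), f ≠ 0 → f.IsHomogeneous 3 →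
      ∀ hfin : {W : Submodule k (Fin n → k) |
          Module.finrank k ((Fin n → k) ⧸ W) = c ∧
          ∀ w ∈ W, MvPolynomial.eval w f = 0}.Finite,
        hfin.toFinset.card ≤ B := by
  have h6 : (6 : k) ≠ 0 := by convert mul_ne_zero h2 h3; norm_num
  obtain ⟨B, hB⟩ := TrilinearForm.exists_ncard_isotropicSubspaces_le k c
  refine ⟨B, fun n f _ hf hfin => ?_⟩
  rw [← Set.ncard_eq_toFinset_card _ hfin]
  rcases Set.eq_empty_or_nonempty {W : Submodule k (Fin n → k) |
      Module.finrank k ((Fin n → k) ⧸ W) = c ∧ ∀ w ∈ W, MvPolynomial.eval w f = 0} with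
    h_empty | ⟨W, hW, -⟩
  · simp [h_empty]
  have hn : Module.finrank k (Fin n → k) = Module.finrank k W + c := by
    rw [← W.finrank_quotient_add_finrank, hW, add_comm]
  obtain ⟨F, hF, hFf⟩ := TrilinearForm.exists_isSymm_apply_self_eq_six_mul_eval hf
  rw [TrilinearForm.setOf_finrank_quotient_eq_and_forall_eq_zero h6 hF hFf hn] at hfin ⊢
  exact hB hF hn hfin
end
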